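/- arXiv:2201.03656 — 7 statements merged into one kernel-verified Lean document; each statement's English description precedes it below -/
import Mathlib

section
/- Assume T ≥ n and persistency of excitation. Then V* = [X0·K_U 0]·Ker[Y·K_U Y·K0]; that is, V* is exactly the set of vectors X0·K_U·α over all pairs (α, β) satisfying Y·K_U·α + Y·K0·β = 0. -/
/-!
Controlled invariant subspaces of `Ker C` are the post-fixed points of the monotone map
`V ↦ Ker C ⊓ A⁻¹(V ⊔ Im B)`, so `V*` is its greatest fixed point, and by a dimension count `T ≥ n`
iterations from the whole space reach it. The `T`-th iterate consists of the initial states from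
which some input keeps the output zero at times `0, …, T - 1`. Under persistency of excitation
every trajectory agrees on this horizon with a linear combination `g` of the experiments, so `V*`
is the image of `Ker Y` under `X0`. Persistency of excitation also splits every `g` as
`K_U α + K0 β`, and `K0 β` does not contribute to `X0 g`.
-/

section FixedPoint

variable {α : Type*} [CompleteLattice α] (F : α →o α)

theorem gfp_le_iterate_top (k : ℕ) : F.gfp ≤ F^[k] ⊤ :=
  calc F.gfp = F^[k] F.gfp := (F.isFixedPt_gfp.iterate k).symm
    _ ≤ F^[k] ⊤ := F.monotone.iterate k le_top

theorem iterate_top_eq_gfp_or_add_le {r : α → ℕ} (hr : StrictMono r) (k : ℕ) :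
    F^[k] ⊤ = F.gfp ∨ r (F^[k] ⊤) + k ≤ r ⊤ := by
  induction k with
  | zero => exact .inr le_rfl
  | succ k ih =>
    rw [Function.iterate_succ_apply']
    rcases ih with hgfp | hrank
    · exact .inl (by rw [hgfp, F.map_gfp])
    have hle : F (F^[k] ⊤) ≤ F^[k] ⊤ := by
      rw [← Function.iterate_succ_apply' F]
      exact F.monotone.antitone_iterate_of_map_le le_top k.le_succ
    rcases hle.eq_or_lt with hfix | hlt
    · exact .inl (hfix.trans ((F.le_gfp hfix.ge).antisymm (gfp_le_iterate_top F k)))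
    · have := hr hlt
      exact .inr (by omega)

theorem iterate_top_eq_gfp {r : α → ℕ} (hr : StrictMono r) {k : ℕ} (hk : r ⊤ ≤ k) :
    F^[k] ⊤ = F.gfp := by
  rcases iterate_top_eq_gfp_or_add_le F hr k with hgfp | hrank
  · exact hgfp
  · refine ((gfp_le_iterate_top F k).eq_of_not_lt fun hlt => ?_).symm
    have := hr hlt
    omega

end FixedPoint

section ControlledInvariant

variable {R E : Type*} [Semiring R] [AddCommMonoid E] [Module R E]

/-- `V` is `(A, S)`-controlled invariant: `A V ⊆ V + S`. For a system with input map `B`, the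
subspace `S` is `Im B`. -/
def IsControlledInvariant (A : E →ₗ[R] E) (S V : Submodule R E) : Prop :=
  ∀ v ∈ V, A v ∈ V ⊔ S

/-- The step `V ↦ Z ⊓ A⁻¹(V ⊔ S)` of the invariant subspace algorithm, whose iterates from `⊤`
approximate the largest `(A, S)`-controlled invariant subspace of `Z` from above. -/
def controlledInvariantStep (A : E →ₗ[R] E) (S Z : Submodule R E) :
    Submodule R E →o Submodule R E where
  toFun V := Z ⊓ (V ⊔ S).comap A
  monotone' _ _ h := inf_le_inf_left _ (Submodule.comap_mono (sup_le_sup_right h _))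

theorem le_controlledInvariantStep_iff {A : E →ₗ[R] E} {S Z V : Submodule R E} :
    V ≤ controlledInvariantStep A S Z V ↔ IsControlledInvariant A S V ∧ V ≤ Z :=
  le_inf_iff.trans and_comm

theorem isGreatest_gfp_controlledInvariantStep (A : E →ₗ[R] E) (S Z : Submodule R E) :
    IsGreatest {V | IsControlledInvariant A S V ∧ V ≤ Z} (controlledInvariantStep A S Z).gfp := by
  simpa only [le_controlledInvariantStep_iff] using
    (controlledInvariantStep A S Z).isGreatest_gfp_le

end ControlledInvariant

theorem iterate_controlledInvariantStep_top_eq {K E : Type*} [DivisionRing K] [AddCommGroup E]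
    [Module K E] [FiniteDimensional K E] {A : E →ₗ[K] E} {S Z V : Submodule K E}
    (hV : IsGreatest {V' | IsControlledInvariant A S V' ∧ V' ≤ Z} V) {k : ℕ}
    (hk : Module.finrank K E ≤ k) : (controlledInvariantStep A S Z)^[k] ⊤ = V :=
  (iterate_top_eq_gfp _ Submodule.finrank_strictMono (by rwa [finrank_top])).trans
    ((isGreatest_gfp_controlledInvariantStep A S Z).unique hV)

section Trajectories

variable {R E W : Type*} [Ring R] [AddCommGroup E] [Module R E] [AddCommGroup W] [Module R W]

/-- The state-input trajectories `(x, u)` of `x (t + 1) = A (x t) + B (u t)` on all of `ℕ`. -/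
def trajectories (A : E →ₗ[R] E) (B : W →ₗ[R] E) : Submodule R ((ℕ → E) × (ℕ → W)) where
  carrier := {w | ∀ t, w.1 (t + 1) = A (w.1 t) + B (w.2 t)}
  add_mem' {w w'} hw hw' t := by
    simp only [Prod.fst_add, Prod.snd_add, Pi.add_apply, map_add, hw t, hw' t]
    abel
  zero_mem' t := by simp
  smul_mem' c w hw t := by
    simp only [Prod.smul_fst, Prod.smul_snd, Pi.smul_apply, map_smul, hw t, smul_add]

variable {A : E →ₗ[R] E} {B : W →ₗ[R] E}

theorem iterate_mem_trajectories (v : E) : ((fun t => A^[t] v), 0) ∈ trajectories A B := fun t => by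
  simp [Function.iterate_succ_apply']

theorem shift_mem_trajectories {w : (ℕ → E) × (ℕ → W)} (hw : w ∈ trajectories A B) :
    ((fun t => w.1 (t + 1)), fun t => w.2 (t + 1)) ∈ trajectories A B :=
  fun t => hw (t + 1)

theorem cons_mem_trajectories {w : (ℕ → E) × (ℕ → W)} (hw : w ∈ trajectories A B) {v : E} {a : W}
    (h : w.1 0 = A v + B a) :
    ((fun t => Nat.casesOn t v w.1), fun t => Nat.casesOn t a w.2) ∈ trajectories A B
  | 0 => h
  | t + 1 => hw t

theorem fst_eq_of_mem_trajectories {w w' : (ℕ → E) × (ℕ → W)} (hw : w ∈ trajectories A B)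
    (hw' : w' ∈ trajectories A B) (hinit : w.1 0 = w'.1 0) {T : ℕ}
    (hinput : ∀ t < T, w.2 t = w'.2 t) : ∀ t ≤ T, w.1 t = w'.1 t
  | 0, _ => hinit
  | t + 1, ht => by
    rw [hw t, hw' t, hinput t ht,
      fst_eq_of_mem_trajectories hw hw' hinit hinput t (Nat.le_of_succ_le ht)]

theorem mem_iterate_controlledInvariantStep_iff {Z : Submodule R E} {k : ℕ} {v : E} :
    v ∈ (controlledInvariantStep A B.range Z)^[k] ⊤ ↔
      ∃ w ∈ trajectories A B, w.1 0 = v ∧ ∀ t < k, w.1 t ∈ Z := by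
  induction k generalizing v with
  | zero => exact ⟨fun _ => ⟨_, iterate_mem_trajectories v, rfl, by simp⟩, fun _ => trivial⟩
  | succ k ih =>
    rw [Function.iterate_succ_apply']
    constructor
    · rintro ⟨hvZ, hAv⟩
      obtain ⟨y, hy, _, ⟨a, rfl⟩, hya⟩ := Submodule.mem_sup.1 hAv
      obtain ⟨w, hw, rfl, hwZ⟩ := ih.1 hy
      have hstep : w.1 0 = A v + B (-a) := by rw [map_neg, ← hya, add_neg_cancel_right]
      refine ⟨_, cons_mem_trajectories hw hstep, rfl, ?_⟩
      rintro (_ | t) ht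
      · exact hvZ
      · exact hwZ t (Nat.lt_of_succ_lt_succ ht)
    · rintro ⟨w, hw, rfl, hwZ⟩
      have hnext : w.1 1 ∈ (controlledInvariantStep A B.range Z)^[k] ⊤ :=
        ih.2 ⟨_, shift_mem_trajectories hw, rfl, fun t ht => hwZ (t + 1) (Nat.succ_lt_succ ht)⟩
      refine ⟨hwZ 0 k.succ_pos, Submodule.mem_sup.2 ⟨_, hnext, B (-w.2 0), ⟨_, rfl⟩, ?_⟩⟩
      rw [hw 0, map_neg, add_neg_cancel_right]

theorem mem_iterate_controlledInvariantStep_iff_of_le_trajectories {Z : Submodule R E} {T : ℕ}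
    {D : Submodule R ((ℕ → E) × (ℕ → W))} (hD : D ≤ trajectories A B)
    (hexc : ∀ (a : E) (b : ℕ → W), ∃ w ∈ D, w.1 0 = a ∧ ∀ t < T, w.2 t = b t) {v : E} :
    v ∈ (controlledInvariantStep A B.range Z)^[T] ⊤ ↔
      ∃ w ∈ D, w.1 0 = v ∧ ∀ t < T, w.1 t ∈ Z := by
  rw [mem_iterate_controlledInvariantStep_iff]
  constructor
  · rintro ⟨w, hw, rfl, hwZ⟩
    obtain ⟨d, hd, hinit, hinput⟩ := hexc (w.1 0) w.2
    refine ⟨d, hd, hinit, fun t ht => ?_⟩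
    rw [fst_eq_of_mem_trajectories (hD hd) hw hinit hinput t ht.le]
    exact hwZ t ht
  · rintro ⟨d, hd, hinit, hdZ⟩
    exact ⟨d, hD hd, hinit, hdZ⟩

end Trajectories

section KernelSplitting

variable {R M M₁ M₂ M₃ N₁ N₂ : Type*} [Ring R] [AddCommGroup M] [Module R M]
  [AddCommGroup M₁] [Module R M₁] [AddCommGroup M₂] [Module R M₂] [AddCommGroup M₃] [Module R M₃]
  [AddCommGroup N₁] [Module R N₁] [AddCommGroup N₂] [Module R N₂]
  {f : M →ₗ[R] M₁} {g : M →ₗ[R] M₂}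

theorem ker_sup_ker_eq_top_of_surjective_prod (h : Function.Surjective (f.prod g)) :
    g.ker ⊔ f.ker = ⊤ := by
  refine eq_top_iff.2 fun x _ => ?_
  obtain ⟨y, hy⟩ := h (f x, 0)
  obtain ⟨hfy, hgy⟩ := Prod.ext_iff.1 hy
  refine Submodule.mem_sup.2 ⟨y, hgy, x - y, ?_, add_sub_cancel y x⟩
  rw [LinearMap.mem_ker, map_sub, sub_eq_zero]
  exact hfy.symm

theorem coe_map_ker_eq_setOf_of_surjective_prod (h : Function.Surjective (f.prod g))
    (y : M →ₗ[R] M₃) {k : N₁ →ₗ[R] M} (hk : k.range = g.ker) {l : N₂ →ₗ[R] M}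
    (hl : l.range = f.ker) :
    (y.ker.map f : Set M₁) = {v | ∃ a b, y (k a) + y (l b) = 0 ∧ v = f (k a)} := by
  have hf (a : N₁) (b : N₂) : f (k a + l b) = f (k a) := by
    have hlb : l b ∈ f.ker := hl ▸ l.mem_range_self b
    rw [map_add, LinearMap.mem_ker.1 hlb, add_zero]
  ext v
  constructor
  · rintro ⟨x, hx, rfl⟩
    have hx_split : x ∈ k.range ⊔ l.range := by
      rw [hk, hl, ker_sup_ker_eq_top_of_surjective_prod h]
      trivial
    obtain ⟨_, ⟨a, rfl⟩, _, ⟨b, rfl⟩, rfl⟩ := Submodule.mem_sup.1 hx_split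
    exact ⟨a, b, (map_add y _ _).symm.trans hx, hf a b⟩
  · rintro ⟨a, b, hab, rfl⟩
    exact ⟨k a + l b, (map_add y _ _).trans hab, hf a b⟩

end KernelSplitting

section Data

open Matrix

variable {n m p ι : Type*} [Fintype n] [Fintype m] [Fintype ι]

theorem surjective_prod_mulVecLin_of_rank_fromRows {K : Type*} [Field K]
    {P : Matrix n ι K} {Q : Matrix m ι K}
    (h : (fromRows P Q).rank = Fintype.card n + Fintype.card m) :
    Function.Surjective (P.mulVecLin.prod Q.mulVecLin) := by
  have htop : (fromRows P Q).mulVecLin.range = ⊤ :=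
    Submodule.eq_top_of_finrank_eq (by simpa using! h)
  rintro ⟨a, b⟩
  obtain ⟨g, hg⟩ := LinearMap.range_eq_top.1 htop (Sum.elim a b)
  rw [mulVecLin_apply, fromRows_mulVec, Sum.elim_eq_iff] at hg
  exact ⟨g, Prod.ext hg.1 hg.2⟩

theorem mulVec_apply_eq_linearCombination {R κ F : Type*} [CommSemiring R]
    [AddCommMonoid F] [Module R F] {M : Matrix κ ι R} {j : κ} {d : ι → F} (φ : F →ₗ[R] R)
    (h : ∀ i, M j i = φ (d i)) (g : ι → R) :
    (M *ᵥ g) j = φ (Fintype.linearCombination R d g) := by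
  simp [mulVec, dotProduct, Fintype.linearCombination_apply, h, mul_comm]

theorem iterate_controlledInvariantStep_eq_map_ker_of_surjective_prod {R : Type*} [CommRing R]
    {T : ℕ} {A : Matrix n n R} {B : Matrix n m R} {C : Matrix p n R}
    {x : ι → ℕ → n → R} {u : ι → ℕ → m → R}
    {X0 : Matrix n ι R} {U : Matrix (Fin T × m) ι R} {Y : Matrix (Fin T × p) ι R}
    (hdyn : ∀ i t, x i (t + 1) = A *ᵥ x i t + B *ᵥ u i t)
    (hX0 : ∀ j i, X0 j i = x i 0 j)
    (hU : ∀ (t : Fin T) j i, U (t, j) i = u i t j)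
    (hY : ∀ (t : Fin T) j i, Y (t, j) i = (C *ᵥ x i t) j)
    (hexc : Function.Surjective (X0.mulVecLin.prod U.mulVecLin)) :
    (controlledInvariantStep A.mulVecLin B.mulVecLin.range C.mulVecLin.ker)^[T] ⊤ =
      Y.mulVecLin.ker.map X0.mulVecLin := by
  let comb := Fintype.linearCombination R fun i => (x i, u i)
  let state (t : ℕ) : (ℕ → n → R) × (ℕ → m → R) →ₗ[R] n → R :=
    LinearMap.proj t ∘ₗ LinearMap.fst R _ _
  let input (t : ℕ) : (ℕ → n → R) × (ℕ → m → R) →ₗ[R] m → R :=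
    LinearMap.proj t ∘ₗ LinearMap.snd R _ _
  have hX0_comb (g : ι → R) : X0 *ᵥ g = (comb g).1 0 := funext fun j =>
    mulVec_apply_eq_linearCombination (LinearMap.proj j ∘ₗ state 0) (hX0 j) g
  have hU_comb (g : ι → R) (t : Fin T) (j : m) : (U *ᵥ g) (t, j) = (comb g).2 t j :=
    mulVec_apply_eq_linearCombination (LinearMap.proj j ∘ₗ input t) (hU t j) g
  have hY_comb (g : ι → R) (t : Fin T) (j : p) : (Y *ᵥ g) (t, j) = (C *ᵥ (comb g).1 t) j :=
    mulVec_apply_eq_linearCombination (LinearMap.proj j ∘ₗ C.mulVecLin ∘ₗ state t) (hY t j) g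
  have hcomb_le : comb.range ≤ trajectories A.mulVecLin B.mulVecLin := by
    rw [Fintype.range_linearCombination, Submodule.span_le]
    rintro _ ⟨i, rfl⟩
    exact hdyn i
  have hcomb_exc (a : n → R) (b : ℕ → m → R) :
      ∃ w ∈ comb.range, w.1 0 = a ∧ ∀ t < T, w.2 t = b t := by
    obtain ⟨g, hg⟩ := hexc (a, fun q => b q.1 q.2)
    obtain ⟨hinit, hinput⟩ := Prod.ext_iff.1 hg
    refine ⟨comb g, ⟨g, rfl⟩, (hX0_comb g).symm.trans hinit, fun t ht => funext fun j => ?_⟩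
    exact (hU_comb g ⟨t, ht⟩ j).symm.trans (congrFun hinput (⟨t, ht⟩, j))
  have hY_ker (g : ι → R) : Y *ᵥ g = 0 ↔ ∀ t < T, (comb g).1 t ∈ C.mulVecLin.ker := by
    simp only [funext_iff, Prod.forall, hY_comb, LinearMap.mem_ker, mulVecLin_apply,
      Fin.forall_iff, Pi.zero_apply]
  ext v
  rw [mem_iterate_controlledInvariantStep_iff_of_le_trajectories hcomb_le hcomb_exc]
  simp only [LinearMap.mem_range, exists_exists_eq_and, Submodule.mem_map, LinearMap.mem_ker,
    mulVecLin_apply, hX0_comb, hY_ker, and_comm]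

theorem stmt_0_general {K : Type*} [Field K] {kU k0 : Type*} [Fintype kU] [Fintype k0] {T : ℕ}
    (hT : Fintype.card n ≤ T)
    {A : Matrix n n K} {B : Matrix n m K} {C : Matrix p n K} {V : Submodule K (n → K)}
    (hV : IsGreatest {V' | IsControlledInvariant A.mulVecLin B.mulVecLin.range V' ∧
      V' ≤ C.mulVecLin.ker} V)
    {x : ι → ℕ → n → K} {u : ι → ℕ → m → K}
    (hdyn : ∀ i t, x i (t + 1) = A *ᵥ x i t + B *ᵥ u i t)
    {X0 : Matrix n ι K} (hX0 : ∀ j i, X0 j i = x i 0 j)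
    {U : Matrix (Fin T × m) ι K} (hU : ∀ (t : Fin T) j i, U (t, j) i = u i t j)
    {Y : Matrix (Fin T × p) ι K} (hY : ∀ (t : Fin T) j i, Y (t, j) i = (C *ᵥ x i t) j)
    (hpe : (fromRows X0 U).rank = Fintype.card n + Fintype.card m * T)
    {KU : Matrix ι kU K} (hKU : KU.mulVecLin.range = U.mulVecLin.ker)
    {K0 : Matrix ι k0 K} (hK0 : K0.mulVecLin.range = X0.mulVecLin.ker) :
    (V : Set (n → K)) =
      {v | ∃ (α : kU → K) (β : k0 → K), (Y * KU) *ᵥ α + (Y * K0) *ᵥ β = 0 ∧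
        v = (X0 * KU) *ᵥ α} := by
  have hexc : Function.Surjective (X0.mulVecLin.prod U.mulVecLin) :=
    surjective_prod_mulVecLin_of_rank_fromRows (by simpa [mul_comm] using hpe)
  have hV_eq : V = Y.mulVecLin.ker.map X0.mulVecLin :=
    (iterate_controlledInvariantStep_top_eq hV (by simpa using hT)).symm.trans
      (iterate_controlledInvariantStep_eq_map_ker_of_surjective_prod hdyn hX0 hU hY hexc)
  rw [hV_eq, coe_map_ker_eq_setOf_of_surjective_prod hexc _ hKU hK0]
  simp only [mulVecLin_apply, mulVec_mulVec]

end Data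

/-- data-driven formula for V*, the largest (A, Im B)-controlled
invariant subspace contained in Ker C. -/
theorem stmt_0
    (n m p N T : ℕ) (hT : n ≤ T)
    (A : Matrix (Fin n) (Fin n) ℝ) (B : Matrix (Fin n) (Fin m) ℝ)
    (C : Matrix (Fin p) (Fin n) ℝ)
    -- V* : largest (A, Im B)-controlled invariant subspace contained in Ker C
    (Vstar : Submodule ℝ (Fin n → ℝ))
    (hVinv : ∀ v ∈ Vstar, A.mulVec v ∈ Vstar ⊔ LinearMap.range B.mulVecLin)
    (hVker : Vstar ≤ LinearMap.ker C.mulVecLin)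
    (hVmax : ∀ W : Submodule ℝ (Fin n → ℝ),
      (∀ v ∈ W, A.mulVec v ∈ W ⊔ LinearMap.range B.mulVecLin) →
      W ≤ LinearMap.ker C.mulVecLin → W ≤ Vstar)
    -- data generated by N experiments of horizon T
    (x : Fin N → ℕ → Fin n → ℝ) (u : Fin N → ℕ → Fin m → ℝ)
    (hdyn : ∀ i t, x i (t + 1) = A.mulVec (x i t) + B.mulVec (u i t))
    (X0 : Matrix (Fin n) (Fin N) ℝ) (hX0 : ∀ j i, X0 j i = x i 0 j)
    (U : Matrix (Fin T × Fin m) (Fin N) ℝ)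
    (hU : ∀ (t : Fin T) (j : Fin m) (i : Fin N), U (t, j) i = u i t.val j)
    (X : Matrix (Fin T × Fin n) (Fin N) ℝ)
    (hX : ∀ (t : Fin T) (j : Fin n) (i : Fin N), X (t, j) i = x i (t.val + 1) j)
    (Y : Matrix (Fin T × Fin p) (Fin N) ℝ)
    (hY : ∀ (t : Fin T) (j : Fin p) (i : Fin N), Y (t, j) i = C.mulVec (x i t.val) j)
    -- persistency of excitation
    (hpe : (Matrix.fromRows X0 U).rank = n + m * T)
    -- K_U and K0: matrices whose columns form bases of Ker U and Ker X0
    (kU k0 : ℕ)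
    (KU : Matrix (Fin N) (Fin kU) ℝ)
    (hKUrange : LinearMap.range KU.mulVecLin = LinearMap.ker U.mulVecLin)
    (hKUinj : Function.Injective KU.mulVecLin)
    (K0 : Matrix (Fin N) (Fin k0) ℝ)
    (hK0range : LinearMap.range K0.mulVecLin = LinearMap.ker X0.mulVecLin)
    (hK0inj : Function.Injective K0.mulVecLin) :
    -- V* = [X0·K_U  0]·Ker [Y·K_U  Y·K0]
    (Vstar : Set (Fin n → ℝ)) =
      {v | ∃ (α : Fin kU → ℝ) (β : Fin k0 → ℝ),
        (Y * KU).mulVec α + (Y * K0).mulVec β = 0 ∧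
        v = (X0 * KU).mulVec α} :=
  stmt_0_general (by simpa using hT) ⟨⟨hVinv, hVker⟩, fun W hW => hVmax W hW.1 hW.2⟩
    hdyn hX0 hU hY (by simpa using hpe) hKUrange hK0range
end

section
/- Assume T ≥ n and persistency of excitation. Then S* = H·X·K0·Ker(Y·K0), where H = [0 ⋯ 0 I_n] ∈ ℝ^{n×nT} selects the last n rows; that is, S* is exactly the set of final states x(T) = H·X·K0·β over all β satisfying Y·K0·β = 0. -/
/-!
Write `Φ S = A (S ⊓ Ker C) ⊔ Im B`. Conditioned invariant subspaces containing `Im B` are exactly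
the `S` with `Φ S ≤ S`, so `S*` is the least fixed point of `Φ`, and for dimension reasons it is
reached after `n` steps of the iteration from `⊥`. The `k`-th iterate is the set of states `x(k)`
that can be reached from `x(0) = 0` while `y(0) = ⋯ = y(k-1) = 0`. On the data side, combinations of
experiments are trajectories, and excitation makes every trajectory from the origin over the horizon
a combination of experiments with coefficients in `Ker X0`, that is, of the form `K0 β`.
-/

section Iteration

variable {K V : Type*} [DivisionRing K] [AddCommGroup V] [Module K V] [Module.Finite K V]

theorem le_finrank_iterate_bot_or_isFixedPt (f : Submodule K V →o Submodule K V) (k : ℕ) :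
    k ≤ Module.finrank K (f^[k] ⊥ : Submodule K V) ∨ Function.IsFixedPt f (f^[k] ⊥) := by
  induction k with
  | zero => exact Or.inl (Nat.zero_le _)
  | succ k ih =>
    rw [Function.iterate_succ_apply']
    by_cases fixed : Function.IsFixedPt f (f^[k] ⊥)
    · exact Or.inr (fixed.eq.symm ▸ fixed)
    · have le_map : f^[k] ⊥ ≤ f (f^[k] ⊥) := by
        rw [← Function.iterate_succ_apply' f]
        exact f.monotone.monotone_iterate_of_le_map bot_le k.le_succ
      have lt_map : f^[k] ⊥ < f (f^[k] ⊥) := le_map.lt_of_ne' fixed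
      exact Or.inl ((ih.resolve_right fixed).trans_lt (Submodule.finrank_lt_finrank_of_lt lt_map))

theorem lfp_eq_iterate_bot_of_finrank_le (f : Submodule K V →o Submodule K V) {k : ℕ}
    (hk : Module.finrank K V ≤ k) : f.lfp = f^[k] ⊥ := by
  have iterate_le_lfp : f^[k] ⊥ ≤ f.lfp :=
    calc f^[k] ⊥ ≤ f^[k] f.lfp := f.monotone.iterate k bot_le
      _ = f.lfp := Function.iterate_fixed f.map_lfp k
  refine le_antisymm ?_ iterate_le_lfp
  rcases le_finrank_iterate_bot_or_isFixedPt f k with h | fixed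
  · have eq_top : (f^[k] ⊥ : Submodule K V) = ⊤ :=
      Submodule.eq_top_of_finrank_eq ((Submodule.finrank_le _).antisymm (hk.trans h))
    exact eq_top ▸ le_top
  · exact f.lfp_le_fixed fixed

end Iteration

section LinearSystem

variable {R V W Z : Type*} [Semiring R] [AddCommMonoid V] [Module R V] [AddCommMonoid W]
  [Module R W] [AddCommMonoid Z] [Module R Z]

/-- `S` is an `(A, Ker C)`-conditioned invariant subspace: `A (S ∩ Ker C) ⊆ S`. -/
def IsConditionedInvariant (A : V →ₗ[R] V) (C : V →ₗ[R] Z) (S : Submodule R V) : Prop :=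
  ∀ v ∈ S ⊓ LinearMap.ker C, A v ∈ S

/-- The operator `S ↦ A (S ∩ Ker C) + Im B`, whose iteration from `0` computes `S*`. -/
def conditionedStep (A : V →ₗ[R] V) (B : W →ₗ[R] V) (C : V →ₗ[R] Z) :
    Submodule R V →o Submodule R V where
  toFun S := (S ⊓ LinearMap.ker C).map A ⊔ LinearMap.range B
  monotone' _ _ h := sup_le_sup_right (Submodule.map_mono (inf_le_inf_right _ h)) _

/-- The state `x(t)` of the system `x(t+1) = A x(t) + B u(t)` started at `x(0) = x₀`. -/
def stateAt (A : V →ₗ[R] V) (B : W →ₗ[R] V) (x₀ : V) (u : ℕ → W) : ℕ → V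
  | 0 => x₀
  | t + 1 => A (stateAt A B x₀ u t) + B (u t)

variable {A : V →ₗ[R] V} {B : W →ₗ[R] V} {C : V →ₗ[R] Z}

theorem conditionedStep_le_iff {S : Submodule R V} :
    conditionedStep A B C S ≤ S ↔ IsConditionedInvariant A C S ∧ LinearMap.range B ≤ S :=
  sup_le_iff.trans (and_congr_left' Submodule.map_le_iff_le_comap)

theorem isLeast_lfp_conditionedStep :
    IsLeast {S | IsConditionedInvariant A C S ∧ LinearMap.range B ≤ S}
      (conditionedStep A B C).lfp := by
  simpa only [conditionedStep_le_iff] using (conditionedStep A B C).isLeast_lfp_le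

theorem stateAt_congr {x₀ : V} {u v : ℕ → W} {t : ℕ} (h : ∀ s < t, u s = v s) :
    stateAt A B x₀ u t = stateAt A B x₀ v t := by
  induction t with
  | zero => rfl
  | succ t ih =>
    simp only [stateAt, ih fun s hs ↦ h s (hs.trans t.lt_succ_self), h t t.lt_succ_self]

theorem mem_iterate_conditionedStep_iff {S : Submodule R V} {k : ℕ} {ξ : V} :
    ξ ∈ (conditionedStep A B C)^[k] S ↔ ∃ x₀ ∈ S, ∃ u : ℕ → W,
      (∀ t < k, C (stateAt A B x₀ u t) = 0) ∧ stateAt A B x₀ u k = ξ := by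
  induction k generalizing ξ with
  | zero => simp [stateAt]
  | succ k ih =>
    rw [Function.iterate_succ_apply']
    constructor
    · intro hξ
      obtain ⟨_, ⟨w, ⟨hw, hCw⟩, rfl⟩, _, ⟨c, rfl⟩, rfl⟩ := Submodule.mem_sup.1 hξ
      obtain ⟨x₀, hx₀, u, hCu, rfl⟩ := ih.1 hw
      have update_eq {t : ℕ} (ht : t ≤ k) :
          stateAt A B x₀ (Function.update u k c) t = stateAt A B x₀ u t :=
        stateAt_congr fun s hs ↦ Function.update_of_ne (hs.trans_le ht).ne c u
      refine ⟨x₀, hx₀, Function.update u k c, fun t ht ↦ ?_, ?_⟩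
      · rw [update_eq (Nat.le_of_lt_succ ht)]
        rcases Nat.lt_succ_iff_lt_or_eq.1 ht with lt | rfl
        exacts [hCu t lt, hCw]
      · rw [stateAt, update_eq le_rfl, Function.update_self]
    · rintro ⟨x₀, hx₀, u, hCu, rfl⟩
      have hmem : stateAt A B x₀ u k ∈ (conditionedStep A B C)^[k] S :=
        ih.2 ⟨x₀, hx₀, u, fun t ht ↦ hCu t (ht.trans k.lt_succ_self), rfl⟩
      exact Submodule.add_mem_sup ⟨_, ⟨hmem, hCu k k.lt_succ_self⟩, rfl⟩ ⟨u k, rfl⟩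

variable {ι : Type*} [Fintype ι] {x : ι → ℕ → V} {u : ι → ℕ → W}

theorem sum_smul_eq_stateAt (hdyn : ∀ i t, x i (t + 1) = A (x i t) + B (u i t)) (α : ι → R)
    (t : ℕ) :
    ∑ i, α i • x i t = stateAt A B (∑ i, α i • x i 0) (fun s ↦ ∑ i, α i • u i s) t := by
  induction t with
  | zero => rfl
  | succ t ih =>
    simp only [hdyn, stateAt, ← ih, map_sum, map_smul, smul_add, Finset.sum_add_distrib]

theorem mem_iterate_conditionedStep_bot_iff_exists_sum_smul
    (hdyn : ∀ i t, x i (t + 1) = A (x i t) + B (u i t)) {T : ℕ}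
    (hexc : ∀ v : ℕ → W, ∃ α : ι → R,
      ∑ i, α i • x i 0 = 0 ∧ ∀ t < T, ∑ i, α i • u i t = v t) {ξ : V} :
    ξ ∈ (conditionedStep A B C)^[T] ⊥ ↔ ∃ α : ι → R, ∑ i, α i • x i 0 = 0 ∧
      (∀ t < T, C (∑ i, α i • x i t) = 0) ∧ ∑ i, α i • x i T = ξ := by
  rw [mem_iterate_conditionedStep_iff]
  constructor
  · rintro ⟨_, rfl, v, hCv, rfl⟩
    obtain ⟨α, hα₀, hαv⟩ := hexc v
    have state_eq {t : ℕ} (ht : t ≤ T) : ∑ i, α i • x i t = stateAt A B 0 v t := by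
      rw [sum_smul_eq_stateAt hdyn, hα₀]
      exact stateAt_congr fun s hs ↦ hαv s (hs.trans_le ht)
    exact ⟨α, hα₀, fun t ht ↦ by rw [state_eq ht.le, hCv t ht], state_eq le_rfl⟩
  · rintro ⟨α, hα₀, hCα, rfl⟩
    refine ⟨_, hα₀, fun s ↦ ∑ i, α i • u i s, fun t ht ↦ ?_, ?_⟩
    · rw [← sum_smul_eq_stateAt hdyn, hCα t ht]
    · rw [← sum_smul_eq_stateAt hdyn]

end LinearSystem

section Matrix

open Matrix

variable {𝕜 ι κ σ μ π ρ : Type*}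

theorem mulVec_apply_eq_sum_smul_apply [CommSemiring 𝕜] [Fintype ι] {M : Matrix ρ ι 𝕜}
    {z : ι → σ → 𝕜} {r : ρ} {j : σ} (h : ∀ i, M r i = z i j) (α : ι → 𝕜) :
    (M *ᵥ α) r = (∑ i, α i • z i) j := by
  simp only [mulVec, dotProduct, h, Finset.sum_apply, Pi.smul_apply, smul_eq_mul, mul_comm]

theorem map_mulVecLin_ker_eq_top_of_rank_fromRows [Field 𝕜] [Fintype ι] [Fintype σ] [Fintype ρ]
    {X : Matrix σ ι 𝕜} {U : Matrix ρ ι 𝕜}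
    (hrank : (fromRows X U).rank = Fintype.card σ + Fintype.card ρ) :
    (LinearMap.ker X.mulVecLin).map U.mulVecLin = ⊤ := by
  have range_eq_top : LinearMap.range (fromRows X U).mulVecLin = ⊤ :=
    Submodule.eq_top_of_finrank_eq (by
      rw [← Matrix.rank, hrank, Module.finrank_fintype_fun_eq_card, Fintype.card_sum])
  refine eq_top_iff.2 fun v _ ↦ ?_
  obtain ⟨α, hα⟩ := LinearMap.range_eq_top.1 range_eq_top (Sum.elim 0 v)
  rw [mulVecLin_apply, fromRows_mulVec, Sum.elim_eq_iff] at hα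
  exact ⟨α, hα.1, hα.2⟩

theorem mulVec_output_eq_zero_iff [CommSemiring 𝕜] [Fintype ι] [Fintype σ] {T : ℕ}
    {C : Matrix π σ 𝕜} {x : ι → ℕ → σ → 𝕜} {Y : Matrix (Fin T × π) ι 𝕜}
    (hY : ∀ (t : Fin T) j i, Y (t, j) i = (C *ᵥ x i t) j) (α : ι → 𝕜) :
    Y *ᵥ α = 0 ↔ ∀ t < T, C.mulVecLin (∑ i, α i • x i t) = 0 := by
  have Y_mulVec (t : Fin T) (j : π) : (Y *ᵥ α) (t, j) = C.mulVecLin (∑ i, α i • x i t) j := by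
    simp only [map_sum, map_smul, mulVecLin_apply]
    exact mulVec_apply_eq_sum_smul_apply (hY t j) α
  simp only [funext_iff, Prod.forall, Fin.forall_iff, Y_mulVec, Pi.zero_apply]

theorem mem_iterate_conditionedStep_bot_iff_exists_mulVec [CommSemiring 𝕜] [Fintype ι] [Fintype σ]
    [Fintype μ] {T : ℕ} (hT₀ : 0 < T)
    {A : Matrix σ σ 𝕜} {B : Matrix σ μ 𝕜} {C : Matrix π σ 𝕜}
    {x : ι → ℕ → σ → 𝕜} {u : ι → ℕ → μ → 𝕜}
    (hdyn : ∀ i t, x i (t + 1) = A *ᵥ x i t + B *ᵥ u i t)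
    {X0 : Matrix σ ι 𝕜} (hX0 : ∀ j i, X0 j i = x i 0 j)
    {U : Matrix (Fin T × μ) ι 𝕜} (hU : ∀ (t : Fin T) j i, U (t, j) i = u i t j)
    {X : Matrix (Fin T × σ) ι 𝕜} (hX : ∀ (t : Fin T) j i, X (t, j) i = x i (t + 1) j)
    {Y : Matrix (Fin T × π) ι 𝕜} (hY : ∀ (t : Fin T) j i, Y (t, j) i = (C *ᵥ x i t) j)
    (hexc : (LinearMap.ker X0.mulVecLin).map U.mulVecLin = ⊤) {ξ : σ → 𝕜} :
    ξ ∈ (conditionedStep A.mulVecLin B.mulVecLin C.mulVecLin)^[T] ⊥ ↔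
      ∃ α, X0 *ᵥ α = 0 ∧ Y *ᵥ α = 0 ∧
        ξ = fun j ↦ (X *ᵥ α) (⟨T - 1, Nat.sub_one_lt_of_lt hT₀⟩, j) := by
  have X0_mulVec (α : ι → 𝕜) : X0 *ᵥ α = ∑ i, α i • x i 0 :=
    funext fun j ↦ mulVec_apply_eq_sum_smul_apply (hX0 j) α
  have X_mulVec_last (α : ι → 𝕜) :
      (fun j ↦ (X *ᵥ α) (⟨T - 1, Nat.sub_one_lt_of_lt hT₀⟩, j)) = ∑ i, α i • x i T := by
    refine funext fun j ↦ mulVec_apply_eq_sum_smul_apply (fun i ↦ ?_) α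
    rw [hX, Nat.sub_add_cancel hT₀]
  have exists_combination (v : ℕ → μ → 𝕜) :
      ∃ α : ι → 𝕜, ∑ i, α i • x i 0 = 0 ∧ ∀ t < T, ∑ i, α i • u i t = v t := by
    obtain ⟨α, hα₀, hαv⟩ := hexc.ge (Submodule.mem_top (x := fun r : Fin T × μ ↦ v r.1 r.2))
    refine ⟨α, (X0_mulVec α).symm.trans hα₀, fun t ht ↦ funext fun j ↦ ?_⟩
    rw [← mulVec_apply_eq_sum_smul_apply (hU ⟨t, ht⟩ j)]
    exact congrFun hαv (⟨t, ht⟩, j)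
  rw [mem_iterate_conditionedStep_bot_iff_exists_sum_smul hdyn exists_combination]
  simp only [X0_mulVec, X_mulVec_last, mulVec_output_eq_zero_iff hY, eq_comm (a := ξ)]

theorem stmt_1_general [Field 𝕜] [Fintype ι] [Fintype κ] [Fintype σ] [Fintype μ] {T : ℕ}
    (hT₀ : 0 < T) (hT : Fintype.card σ ≤ T)
    {A : Matrix σ σ 𝕜} {B : Matrix σ μ 𝕜} {C : Matrix π σ 𝕜} {Sstar : Submodule 𝕜 (σ → 𝕜)}
    (hS : IsLeast {S | IsConditionedInvariant A.mulVecLin C.mulVecLin S ∧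
      LinearMap.range B.mulVecLin ≤ S} Sstar)
    {x : ι → ℕ → σ → 𝕜} {u : ι → ℕ → μ → 𝕜}
    (hdyn : ∀ i t, x i (t + 1) = A *ᵥ x i t + B *ᵥ u i t)
    {X0 : Matrix σ ι 𝕜} (hX0 : ∀ j i, X0 j i = x i 0 j)
    {U : Matrix (Fin T × μ) ι 𝕜} (hU : ∀ (t : Fin T) j i, U (t, j) i = u i t j)
    {X : Matrix (Fin T × σ) ι 𝕜} (hX : ∀ (t : Fin T) j i, X (t, j) i = x i (t + 1) j)
    {Y : Matrix (Fin T × π) ι 𝕜} (hY : ∀ (t : Fin T) j i, Y (t, j) i = (C *ᵥ x i t) j)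
    (hexc : (LinearMap.ker X0.mulVecLin).map U.mulVecLin = ⊤)
    {K0 : Matrix ι κ 𝕜} (hK0 : LinearMap.range K0.mulVecLin = LinearMap.ker X0.mulVecLin) :
    (Sstar : Set (σ → 𝕜)) = {ξ | ∃ β : κ → 𝕜, (Y * K0) *ᵥ β = 0 ∧
      ξ = fun j ↦ ((X * K0) *ᵥ β) (⟨T - 1, Nat.sub_one_lt_of_lt hT₀⟩, j)} := by
  have eq_iterate :
      Sstar = (conditionedStep A.mulVecLin B.mulVecLin C.mulVecLin)^[T] ⊥ :=
    (hS.unique isLeast_lfp_conditionedStep).trans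
      (lfp_eq_iterate_bot_of_finrank_le _ (by rwa [Module.finrank_fintype_fun_eq_card]))
  ext ξ
  rw [eq_iterate, SetLike.mem_coe,
    mem_iterate_conditionedStep_bot_iff_exists_mulVec hT₀ hdyn hX0 hU hX hY hexc]
  simp only [Set.mem_ofPred_eq, ← mulVec_mulVec]
  constructor
  · rintro ⟨α, hα₀, hαY, rfl⟩
    obtain ⟨β, rfl⟩ := hK0.ge hα₀
    exact ⟨β, hαY, rfl⟩
  · rintro ⟨β, hβY, rfl⟩
    exact ⟨K0 *ᵥ β, hK0.le ⟨β, rfl⟩, hβY, rfl⟩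

end Matrix

/-- data-driven formula for S*, the smallest (A, Ker C)-conditioned
invariant subspace containing Im B.  The selector H = [0 ⋯ 0 I_n] picks the last
block (the final state x(T)) of a stacked trajectory. -/
theorem stmt_1
    (n m p N T : ℕ) (hn : 0 < n) (hT : n ≤ T)
    (A : Matrix (Fin n) (Fin n) ℝ) (B : Matrix (Fin n) (Fin m) ℝ)
    (C : Matrix (Fin p) (Fin n) ℝ)
    -- S* : smallest (A, Ker C)-conditioned invariant subspace containing Im B
    (Sstar : Submodule ℝ (Fin n → ℝ))
    (hSinv : ∀ v ∈ Sstar ⊓ LinearMap.ker C.mulVecLin, A.mulVec v ∈ Sstar)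
    (hSim : LinearMap.range B.mulVecLin ≤ Sstar)
    (hSmin : ∀ W : Submodule ℝ (Fin n → ℝ),
      (∀ v ∈ W ⊓ LinearMap.ker C.mulVecLin, A.mulVec v ∈ W) →
      LinearMap.range B.mulVecLin ≤ W → Sstar ≤ W)
    -- data generated by N experiments of horizon T
    (x : Fin N → ℕ → Fin n → ℝ) (u : Fin N → ℕ → Fin m → ℝ)
    (hdyn : ∀ i t, x i (t + 1) = A.mulVec (x i t) + B.mulVec (u i t))
    (X0 : Matrix (Fin n) (Fin N) ℝ) (hX0 : ∀ j i, X0 j i = x i 0 j)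
    (U : Matrix (Fin T × Fin m) (Fin N) ℝ)
    (hU : ∀ (t : Fin T) (j : Fin m) (i : Fin N), U (t, j) i = u i t.val j)
    (X : Matrix (Fin T × Fin n) (Fin N) ℝ)
    (hX : ∀ (t : Fin T) (j : Fin n) (i : Fin N), X (t, j) i = x i (t.val + 1) j)
    (Y : Matrix (Fin T × Fin p) (Fin N) ℝ)
    (hY : ∀ (t : Fin T) (j : Fin p) (i : Fin N), Y (t, j) i = C.mulVec (x i t.val) j)
    -- persistency of excitation
    (hpe : (Matrix.fromRows X0 U).rank = n + m * T)
    -- K0: matrix whose columns form a basis of Ker X0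
    (k0 : ℕ)
    (K0 : Matrix (Fin N) (Fin k0) ℝ)
    (hK0range : LinearMap.range K0.mulVecLin = LinearMap.ker X0.mulVecLin)
    (hK0inj : Function.Injective K0.mulVecLin) :
    -- S* = H·X·K0·Ker(Y·K0): the set of final states x(T) = H·X·K0·β
    (Sstar : Set (Fin n → ℝ)) =
      {ξ | ∃ β : Fin k0 → ℝ, (Y * K0).mulVec β = 0 ∧
        ξ = fun j => (X * K0).mulVec β (⟨T - 1, by omega⟩, j)} := by
  exact stmt_1_general (hn.trans_le hT) (by rwa [Fintype.card_fin])
    ⟨⟨hSinv, hSim⟩, fun W hW ↦ hSmin W hW.1 hW.2⟩ hdyn hX0 hU hX hY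
    (map_mulVecLin_ker_eq_top_of_rank_fromRows (by simpa [mul_comm] using hpe)) hK0range
end

section
/- If the stacked matrix [U_{0,T}; X_{0,T}] has full row rank m + n, then for every feedback gain F ∈ ℝ^{m×n} there exists a matrix G ∈ ℝ^{T×n} such that X_{0,T}·G = I_n, U_{0,T}·G = F, and the closed-loop matrix satisfies A + B·F = X_{1,T}·G. -/
/-!
Full row rank of the stacked data `[U; X₀]` makes its columns span the whole input-state space, so
`[U; X₀] * G = [F; 1]` has a solution `G` for every gain `F`. The rows of this equation are
`U * G = F` and `X₀ * G = 1`; multiplying the data equation `X₁ = A * X₀ + B * U` by `G` on the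
right then turns `A + B * F` into `X₁ * G`.
-/

section

open scoped Matrix

variable {R K m n p τ : Type*}

theorem eq_mul_add_mul_of_forall_transition [NonUnitalNonAssocSemiring R] [Fintype m] [Fintype n]
    {A : Matrix p n R} {B : Matrix p m R} {x : τ → n → R} {u : τ → m → R} {y : τ → p → R}
    (htrans : ∀ t, y t = A *ᵥ x t + B *ᵥ u t)
    {X₀ : Matrix n τ R} (hX₀ : ∀ j t, X₀ j t = x t j)
    {X₁ : Matrix p τ R} (hX₁ : ∀ j t, X₁ j t = y t j)
    {U : Matrix m τ R} (hU : ∀ j t, U j t = u t j) :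
    X₁ = A * X₀ + B * U := by
  obtain rfl : X₀ = (Matrix.of x)ᵀ := Matrix.ext hX₀
  obtain rfl : U = (Matrix.of u)ᵀ := Matrix.ext hU
  ext j t
  exact (hX₁ j t).trans (congrFun (htrans t) j)

theorem add_mul_eq_mul_of_eq_mul_add_mul [Semiring R] [Fintype m] [Fintype n] [DecidableEq n]
    [Fintype τ] {A : Matrix p n R} {B : Matrix p m R} {F : Matrix m n R} {G : Matrix τ n R}
    {X₀ : Matrix n τ R} {U : Matrix m τ R} {X₁ : Matrix p τ R}
    (hdata : X₁ = A * X₀ + B * U) (hX : X₀ * G = 1) (hU : U * G = F) :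
    A + B * F = X₁ * G := by
  rw [hdata, Matrix.add_mul, Matrix.mul_assoc, Matrix.mul_assoc, hX, hU, Matrix.mul_one]

section Field

variable [Field K] [Fintype m] [Fintype τ]

theorem mulVec_surjective_iff_rank_eq_card {M : Matrix m τ K} :
    Function.Surjective M.mulVec ↔ M.rank = Fintype.card m := by
  rw [← Matrix.coe_mulVecLin, ← LinearMap.range_eq_top, Matrix.rank,
    ← Module.finrank_fintype_fun_eq_card K]
  exact ⟨fun h ↦ h ▸ finrank_top K (m → K), Submodule.eq_top_of_finrank_eq⟩

theorem exists_mul_eq_of_rank_eq_card {M : Matrix m τ K} (hM : M.rank = Fintype.card m)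
    (C : Matrix m p K) : ∃ G : Matrix τ p K, M * G = C := by
  classical
  obtain ⟨N, hN⟩ := Matrix.mulVec_surjective_iff_exists_right_inverse.mp
    (mulVec_surjective_iff_rank_eq_card.mpr hM)
  exact ⟨N * C, by rw [← Matrix.mul_assoc, hN, Matrix.one_mul]⟩

theorem exists_mul_eq_and_mul_eq_of_rank_fromRows [Fintype n] {U : Matrix m τ K}
    {X : Matrix n τ K} (hrank : (Matrix.fromRows U X).rank = Fintype.card m + Fintype.card n)
    (C : Matrix m p K) (D : Matrix n p K) :
    ∃ G : Matrix τ p K, U * G = C ∧ X * G = D := by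
  rw [← Fintype.card_sum] at hrank
  obtain ⟨G, hG⟩ := exists_mul_eq_of_rank_eq_card hrank (Matrix.fromRows C D)
  rw [Matrix.fromRows_mul, Matrix.fromRows_ext_iff] at hG
  exact ⟨G, hG⟩

theorem stmt_3_general [Fintype n] [DecidableEq n] {A : Matrix n n K} {B : Matrix n m K}
    {X₀ X₁ : Matrix n τ K} {U : Matrix m τ K} (hdata : X₁ = A * X₀ + B * U)
    (hrank : (Matrix.fromRows U X₀).rank = Fintype.card m + Fintype.card n)
    (F : Matrix m n K) :
    ∃ G : Matrix τ n K, X₀ * G = 1 ∧ U * G = F ∧ A + B * F = X₁ * G := by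
  obtain ⟨G, hU, hX⟩ := exists_mul_eq_and_mul_eq_of_rank_fromRows hrank F 1
  exact ⟨G, hX, hU, add_mul_eq_mul_of_eq_mul_add_mul hdata hX hU⟩

end Field

end

/-- data-driven parametrization of closed-loop matrices
(cf. De Persis–Tesi): under full row rank of [U_{0,T}; X_{0,T}], every feedback
gain F admits G with X_{0,T}·G = I, U_{0,T}·G = F and A + B·F = X_{1,T}·G. -/
theorem stmt_3
    (n m T : ℕ)
    (A : Matrix (Fin n) (Fin n) ℝ) (B : Matrix (Fin n) (Fin m) ℝ)
    -- single experimental trajectory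
    (x : ℕ → Fin n → ℝ) (u : ℕ → Fin m → ℝ)
    (hdyn : ∀ t, x (t + 1) = A.mulVec (x t) + B.mulVec (u t))
    (X0T : Matrix (Fin n) (Fin T) ℝ) (hX0T : ∀ j t, X0T j t = x t.val j)
    (X1T : Matrix (Fin n) (Fin T) ℝ) (hX1T : ∀ j t, X1T j t = x (t.val + 1) j)
    (U0T : Matrix (Fin m) (Fin T) ℝ) (hU0T : ∀ j t, U0T j t = u t.val j)
    -- [U_{0,T}; X_{0,T}] has full row rank m + n
    (hrank : (Matrix.fromRows U0T X0T).rank = m + n) :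
    ∀ F : Matrix (Fin m) (Fin n) ℝ,
      ∃ G : Matrix (Fin T) (Fin n) ℝ,
        X0T * G = 1 ∧ U0T * G = F ∧ A + B * F = X1T * G := by
  have hdata := eq_mul_add_mul_of_forall_transition (fun t : Fin T ↦ hdyn t) hX0T hX1T hU0T
  exact stmt_3_general hdata (by simpa only [Fintype.card_fin] using hrank)
end

section
/- Assume R* = V* ∩ S* = {0}, and let F ∈ ℝ^{m×n} be any feedback gain such that (A + B·F)·V* ⊆ V*. Then the invariant zeros of (A, B, C) are exactly the eigenvalues over ℂ of the restriction of A + B·F to the invariant subspace V* (equivalently, of the complexification of A + B·F restricted to the complexification of V*). -/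
/-- The Rosenbrock system matrix [zI − A, −B; C, 0] over ℂ. -/
noncomputable def rosenbrock {n m p : ℕ} (A : Matrix (Fin n) (Fin n) ℝ)
    (B : Matrix (Fin n) (Fin m) ℝ) (C : Matrix (Fin p) (Fin n) ℝ) (z : ℂ) :
    Matrix (Fin n ⊕ Fin p) (Fin n ⊕ Fin m) ℂ :=
  Matrix.fromBlocks (z • (1 : Matrix (Fin n) (Fin n) ℂ) - A.map Complex.ofReal)
    (-(B.map Complex.ofReal)) (C.map Complex.ofReal) 0

/-- z is an invariant zero of (A,B,C) if the Rosenbrock matrix drops rank below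
its normal rank max_{s ∈ ℂ} rank [sI − A, −B; C, 0]. -/
noncomputable def IsInvariantZero {n m p : ℕ} (A : Matrix (Fin n) (Fin n) ℝ)
    (B : Matrix (Fin n) (Fin m) ℝ) (C : Matrix (Fin p) (Fin n) ℝ) (z : ℂ) : Prop :=
  (rosenbrock A B C z).rank < ⨆ s : ℂ, (rosenbrock A B C s).rank

open Matrix Module

/-!
Let `(x, u)` lie in the kernel of the Rosenbrock matrix at `z`. Then `z x = A x + B u` and
`C x = 0`, so the line through `x` is controlled invariant and contained in `ker C`, whence `x ∈ V*`
by maximality. Now `z x - (A + B F) x = B (u - F x)` lies in `V* ∩ Im B = 0`, so `x` belongs to the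
eigenspace `E z` of `A + B F` on `V*` and `u - F x ∈ ker B`. Hence the kernel is isomorphic to
`E z × ker B`, and by rank-nullity the Rosenbrock matrix has rank `n + rank B - dim E z`. As `E s`
vanishes for all but finitely many `s`, the normal rank is `n + rank B`, and it drops at `z` exactly
when `E z ≠ 0`.

Over an extension `L / K` the same argument applies to the `L`-span of `V*`, which is again the
largest controlled invariant subspace in the kernel of the output map: applying `K`-linear
functionals `L → K` coordinatewise to an output-nulling subspace over `L` yields one over `K`.
-/

section OutputNulling

variable {K ι κ τ : Type*} [Field K] [Fintype ι] [Fintype κ]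

/-- `W` is output-nulling for `(A, B, C)`: it is `(A, Im B)`-controlled invariant and contained in
`ker C`. The subspace `V*` of `(A, B, C)` is the greatest output-nulling subspace. -/
def IsOutputNulling (A : Matrix ι ι K) (B : Matrix ι κ K) (C : Matrix τ ι K)
    (W : Submodule K (ι → K)) : Prop :=
  (∀ v ∈ W, A *ᵥ v ∈ W ⊔ LinearMap.range B.mulVecLin) ∧ W ≤ LinearMap.ker C.mulVecLin

variable {A : Matrix ι ι K} {B : Matrix ι κ K} {C : Matrix τ ι K}

lemma isOutputNulling_span_singleton {z : K} {x : ι → K} {u : κ → K}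
    (hx : z • x = A *ᵥ x + B *ᵥ u) (hCx : C *ᵥ x = 0) :
    IsOutputNulling A B C (K ∙ x) := by
  refine ⟨fun v hv => ?_, (Submodule.span_singleton_le_iff_mem _ _).2 hCx⟩
  obtain ⟨a, rfl⟩ := Submodule.mem_span_singleton.1 hv
  have hAx : A *ᵥ x = z • x + B *ᵥ (-u) := by rw [hx, mulVec_neg]; abel
  rw [mulVec_smul, hAx]
  exact Submodule.smul_mem _ _ (Submodule.add_mem_sup
    (Submodule.smul_mem _ _ (Submodule.mem_span_singleton_self x)) ⟨-u, rfl⟩)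

end OutputNulling

section SystemPencil

variable {K ι κ τ : Type*} [Field K] [Fintype ι] [DecidableEq ι] [Fintype κ]

/-- The Rosenbrock system matrix `[zI - A, -B; C, 0]` over an arbitrary field; `rosenbrock A B C` is
definitionally the pencil of the complexified matrices. -/
def systemPencil (A : Matrix ι ι K) (B : Matrix ι κ K) (C : Matrix τ ι K) (z : K) :
    Matrix (ι ⊕ τ) (ι ⊕ κ) K :=
  fromBlocks (z • (1 : Matrix ι ι K) - A) (-B) C 0

variable {A : Matrix ι ι K} {B : Matrix ι κ K} {C : Matrix τ ι K} {F : Matrix κ ι K}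
  {V : Submodule K (ι → K)}

lemma systemPencil_mulVec_elim_eq_zero_iff {z : K} {x : ι → K} {u : κ → K} :
    systemPencil A B C z *ᵥ Sum.elim x u = 0 ↔ z • x = A *ᵥ x + B *ᵥ u ∧ C *ᵥ x = 0 := by
  rw [systemPencil, fromBlocks_mulVec, ← Sum.elim_zero_zero, Sum.elim_eq_iff]
  simp only [Sum.elim_comp_inl, Sum.elim_comp_inr, sub_mulVec, smul_mulVec, one_mulVec,
    neg_mulVec, zero_mulVec, add_zero, ← sub_eq_add_neg, sub_sub, sub_eq_zero]

lemma systemPencil_mulVec_elim_feedback_eq_zero_iff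
    (hV : IsGreatest {W | IsOutputNulling A B C W} V)
    (hVB : Disjoint V (LinearMap.range B.mulVecLin)) (hF : ∀ v ∈ V, (A + B * F) *ᵥ v ∈ V)
    {z : K} {x : ι → K} {u : κ → K} :
    systemPencil A B C z *ᵥ Sum.elim x (u + F *ᵥ x) = 0 ↔
      x ∈ V ⊓ End.eigenspace (A + B * F).mulVecLin z ∧ u ∈ LinearMap.ker B.mulVecLin := by
  have closed_loop : A *ᵥ x + B *ᵥ (u + F *ᵥ x) = (A + B * F) *ᵥ x + B *ᵥ u := by
    rw [mulVec_add, mulVec_mulVec, add_mulVec]; abel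
  rw [systemPencil_mulVec_elim_eq_zero_iff, Submodule.mem_inf, End.mem_eigenspace_iff,
    LinearMap.mem_ker, mulVecLin_apply, mulVecLin_apply]
  constructor
  · rintro ⟨hx, hCx⟩
    have hxV : x ∈ V := hV.2 (isOutputNulling_span_singleton hx hCx)
      (Submodule.mem_span_singleton_self x)
    rw [closed_loop] at hx
    have hBu : B *ᵥ u = 0 := by
      refine Submodule.disjoint_def.1 hVB _ ?_ ⟨u, rfl⟩
      rw [← sub_eq_of_eq_add' hx]
      exact V.sub_mem (V.smul_mem z hxV) (hF x hxV)
    exact ⟨⟨hxV, by rw [hx, hBu, add_zero]⟩, hBu⟩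
  · rintro ⟨⟨hxV, hx⟩, hBu⟩
    exact ⟨by rw [closed_loop, hx, hBu, add_zero], hV.1.2 hxV⟩

lemma finrank_submodule_prod {E E' : Type*} [AddCommGroup E] [Module K E] [AddCommGroup E']
    [Module K E'] (p : Submodule K E) (q : Submodule K E') [FiniteDimensional K p]
    [FiniteDimensional K q] : finrank K (p.prod q) = finrank K p + finrank K q := by
  have range_eq : LinearMap.range (p.subtype.prodMap q.subtype) = p.prod q := by
    rw [LinearMap.range_prodMap, p.range_subtype, q.range_subtype]
  rw [← range_eq, ← finrank_prod]
  exact LinearMap.finrank_range_of_inj (p.injective_subtype.prodMap q.injective_subtype)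

lemma finrank_ker_systemPencil
    (hV : IsGreatest {W | IsOutputNulling A B C W} V)
    (hVB : Disjoint V (LinearMap.range B.mulVecLin)) (hF : ∀ v ∈ V, (A + B * F) *ᵥ v ∈ V) (z : K) :
    finrank K (LinearMap.ker (systemPencil A B C z).mulVecLin) =
      finrank K ↥(V ⊓ End.eigenspace (A + B * F).mulVecLin z) +
        finrank K (LinearMap.ker B.mulVecLin) := by
  set E := V ⊓ End.eigenspace (A + B * F).mulVecLin z
  let shear : ((ι → K) × (κ → K)) ≃ₗ[K] (ι ⊕ κ → K) :=
    (LinearEquiv.skewProd (.refl K _) (.refl K _) F.mulVecLin).trans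
      (LinearEquiv.sumArrowLequivProdArrow ι κ K K).symm
  have ker_eq : (LinearMap.ker (systemPencil A B C z).mulVecLin).comap shear.toLinearMap =
      E.prod (LinearMap.ker B.mulVecLin) := by
    ext ⟨x, u⟩
    exact systemPencil_mulVec_elim_feedback_eq_zero_iff hV hVB hF
  rw [← finrank_submodule_prod, ← ker_eq, Submodule.comap_equiv_eq_map_symm,
    LinearEquiv.finrank_map_eq]

lemma rank_systemPencil_add_finrank_eigenspace
    (hV : IsGreatest {W | IsOutputNulling A B C W} V)
    (hVB : Disjoint V (LinearMap.range B.mulVecLin)) (hF : ∀ v ∈ V, (A + B * F) *ᵥ v ∈ V) (z : K) :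
    (systemPencil A B C z).rank + finrank K ↥(V ⊓ End.eigenspace (A + B * F).mulVecLin z) =
      Fintype.card ι + B.rank := by
  have rank_nullity := (systemPencil A B C z).mulVecLin.finrank_range_add_finrank_ker
  have rank_nullity_B := B.mulVecLin.finrank_range_add_finrank_ker
  rw [finrank_ker_systemPencil hV hVB hF, finrank_fintype_fun_eq_card, Fintype.card_sum]
    at rank_nullity
  rw [finrank_fintype_fun_eq_card] at rank_nullity_B
  rw [Matrix.rank, Matrix.rank]
  lia

lemma exists_eigenspace_eq_bot [Infinite K] {E : Type*} [AddCommGroup E] [Module K E]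
    [FiniteDimensional K E] (f : End K E) : ∃ s, End.eigenspace f s = ⊥ := by
  obtain ⟨s, hs⟩ := (End.finite_hasEigenvalue f).exists_notMem
  exact ⟨s, not_not.1 hs⟩

lemma iSup_rank_systemPencil [Infinite K]
    (hV : IsGreatest {W | IsOutputNulling A B C W} V)
    (hVB : Disjoint V (LinearMap.range B.mulVecLin)) (hF : ∀ v ∈ V, (A + B * F) *ᵥ v ∈ V) :
    ⨆ s, (systemPencil A B C s).rank = Fintype.card ι + B.rank := by
  have rank_le (s : K) : (systemPencil A B C s).rank ≤ Fintype.card ι + B.rank :=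
    (Nat.le_add_right _ _).trans_eq (rank_systemPencil_add_finrank_eigenspace hV hVB hF s)
  obtain ⟨s, hs⟩ := exists_eigenspace_eq_bot (A + B * F).mulVecLin
  have rank_generic := rank_systemPencil_add_finrank_eigenspace hV hVB hF s
  rw [hs, inf_bot_eq, finrank_bot, add_zero] at rank_generic
  exact le_antisymm (ciSup_le rank_le)
    (rank_generic ▸ le_ciSup ⟨_, Set.forall_mem_range.2 rank_le⟩ s)

lemma rank_systemPencil_lt_iSup_iff [Infinite K]
    (hV : IsGreatest {W | IsOutputNulling A B C W} V)
    (hVB : Disjoint V (LinearMap.range B.mulVecLin)) (hF : ∀ v ∈ V, (A + B * F) *ᵥ v ∈ V) (z : K) :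
    (systemPencil A B C z).rank < ⨆ s, (systemPencil A B C s).rank ↔
      ∃ v ∈ V, v ≠ 0 ∧ (A + B * F) *ᵥ v = z • v := by
  rw [iSup_rank_systemPencil hV hVB hF, ← rank_systemPencil_add_finrank_eigenspace hV hVB hF z,
    Nat.lt_add_right_iff_pos, Nat.pos_iff_ne_zero, Submodule.finrank_eq_zero.ne,
    Submodule.ne_bot_iff]
  simp only [Submodule.mem_inf, End.mem_eigenspace_iff, mulVecLin_apply, and_assoc,
    and_comm (a := _ ≠ _)]

end SystemPencil

section ScalarExtension

variable {K L ι κ τ : Type*} [Field K] [Field L] [Algebra K L]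

variable (L) in
/-- The `L`-span of a subspace `V` of `K^ι` inside `L^ι`; for `L / K = ℂ / ℝ` it is the
complexification of `V`. -/
def scalarExtension (V : Submodule K (ι → K)) : Submodule L (ι → L) :=
  .span L ((fun r j => algebraMap K L (r j)) '' (V : Set (ι → K)))

variable (K) in
/-- The smallest subspace of `K^ι` whose scalar extension contains the subspace `W` of `L^ι`; for
`L / K = ℂ / ℝ` it consists of the real parts of the vectors of `W`. -/
def scalarDescent (W : Submodule L (ι → L)) : Submodule K (ι → K) :=
  ⨆ φ : Dual K L, (W.restrictScalars K).map (φ.compLeft ι)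

lemma eq_zero_of_forall_dual_comp_eq_zero {v : ι → L} (h : ∀ φ : Dual K L, φ ∘ v = 0) : v = 0 :=
  funext fun j => (forall_dual_apply_eq_zero_iff K (v j)).1 fun φ => congrFun (h φ) j

lemma dual_comp_map_mulVec [Fintype ι] (φ : Dual K L) (M : Matrix τ ι K) (v : ι → L) :
    φ ∘ (M.map (algebraMap K L) *ᵥ v) = M *ᵥ (φ ∘ v) := by
  ext j
  simp [mulVec, dotProduct, ← Algebra.smul_def]

lemma map_mulVec_algebraMap_comp [Fintype ι] (M : Matrix τ ι K) (r : ι → K) :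
    M.map (algebraMap K L) *ᵥ (algebraMap K L ∘ r) = algebraMap K L ∘ (M *ᵥ r) :=
  funext fun j => ((algebraMap K L).map_mulVec M r j).symm

lemma dual_comp_mem_of_mem_scalarExtension {V : Submodule K (ι → K)} {v : ι → L}
    (hv : v ∈ scalarExtension L V) (φ : Dual K L) : φ ∘ v ∈ V := by
  induction hv using Submodule.span_induction generalizing φ with
  | mem _ hr =>
    obtain ⟨r, hr, rfl⟩ := hr
    convert V.smul_mem (φ 1) hr using 1
    ext j
    simp [Algebra.algebraMap_eq_smul_one, mul_comm]
  | zero =>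
    change φ.compLeft ι 0 ∈ V
    exact map_zero (φ.compLeft ι) ▸ V.zero_mem
  | add v w _ _ hv hw =>
    change φ.compLeft ι (v + w) ∈ V
    exact map_add (φ.compLeft ι) v w ▸ V.add_mem (hv φ) (hw φ)
  | smul c _ _ hv => exact hv (φ ∘ₗ LinearMap.mulLeft K c)

lemma mem_scalarExtension_iff [Finite ι] {V : Submodule K (ι → K)} {v : ι → L} :
    v ∈ scalarExtension L V ↔ ∀ φ : Dual K L, φ ∘ v ∈ V := by
  classical
  refine ⟨dual_comp_mem_of_mem_scalarExtension, fun hv => ?_⟩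
  have := Fintype.ofFinite ι
  let b := Basis.ofVectorSpace K L
  let S := Finset.univ.biUnion fun j => (b.repr (v j)).support
  have expand : v = ∑ i ∈ S, b i • (algebraMap K L ∘ b.coord i ∘ v) := by
    ext j
    have repr_sum : (b.repr (v j)).sum (fun i a => a • b i) =
        ∑ i ∈ S, b.repr (v j) i • b i :=
      Finsupp.sum_of_support_subset _
        (Finset.subset_biUnion_of_mem (fun j => (b.repr (v j)).support) (Finset.mem_univ j)) _
        fun i _ => zero_smul K (b i)
    rw [← Finsupp.linearCombination_apply, b.linearCombination_repr] at repr_sum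
    simpa [Algebra.smul_def, mul_comm] using repr_sum
  rw [expand]
  exact Submodule.sum_mem _ fun i _ =>
    Submodule.smul_mem _ _ (Submodule.subset_span ⟨_, hv (b.coord i), rfl⟩)

lemma gc_scalarDescent_scalarExtension [Finite ι] :
    GaloisConnection (scalarDescent K (L := L) (ι := ι)) (scalarExtension L) := fun W V => by
  simp only [scalarDescent, iSup_le_iff, Submodule.map_le_iff_le_comap]
  simp only [SetLike.le_def, mem_scalarExtension_iff]
  exact forall_comm.trans (forall_congr' fun _ => forall_comm)

lemma disjoint_scalarExtension_range [Finite ι] [Fintype κ] {B : Matrix ι κ K}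
    {V : Submodule K (ι → K)} (hVB : Disjoint V (LinearMap.range B.mulVecLin)) :
    Disjoint (scalarExtension L V) (LinearMap.range (B.map (algebraMap K L)).mulVecLin) := by
  rw [Submodule.disjoint_def]
  rintro _ hv ⟨u, rfl⟩
  refine eq_zero_of_forall_dual_comp_eq_zero (K := K) fun φ => ?_
  refine Submodule.disjoint_def.1 hVB _ (mem_scalarExtension_iff.1 hv φ) ⟨φ ∘ u, ?_⟩
  exact (dual_comp_map_mulVec φ B u).symm

lemma map_mulVec_mem_scalarExtension [Fintype ι] {M : Matrix ι ι K} {V : Submodule K (ι → K)}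
    (hM : ∀ v ∈ V, M *ᵥ v ∈ V) {v : ι → L} (hv : v ∈ scalarExtension L V) :
    M.map (algebraMap K L) *ᵥ v ∈ scalarExtension L V :=
  mem_scalarExtension_iff.2 fun φ => by
    rw [dual_comp_map_mulVec]
    exact hM _ (mem_scalarExtension_iff.1 hv φ)

variable [Fintype ι] [Fintype κ] {A : Matrix ι ι K} {B : Matrix ι κ K} {C : Matrix τ ι K}
  {V : Submodule K (ι → K)}

lemma isOutputNulling_scalarExtension (hV : IsOutputNulling A B C V) :
    IsOutputNulling (A.map (algebraMap K L)) (B.map (algebraMap K L)) (C.map (algebraMap K L))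
      (scalarExtension L V) := by
  constructor
  · intro v hv
    induction hv using Submodule.span_induction with
    | mem _ hr =>
      obtain ⟨r, hr, rfl⟩ := hr
      obtain ⟨w, hw, _, ⟨u, rfl⟩, hAr⟩ := Submodule.mem_sup.1 (hV.1 r hr)
      refine Submodule.mem_sup.2 ⟨algebraMap K L ∘ w, Submodule.subset_span ⟨w, hw, rfl⟩, _,
        ⟨algebraMap K L ∘ u, rfl⟩, ?_⟩
      rw [mulVecLin_apply, map_mulVec_algebraMap_comp]
      refine Eq.trans ?_ (map_mulVec_algebraMap_comp A r).symm
      rw [← hAr]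
      exact funext fun j => (map_add (algebraMap K L) _ _).symm
    | zero => simp only [mulVec_zero, zero_mem]
    | add v w _ _ hv hw => simpa only [mulVec_add] using add_mem hv hw
    | smul c v _ hv => simpa only [mulVec_smul] using Submodule.smul_mem _ c hv
  · intro v hv
    refine eq_zero_of_forall_dual_comp_eq_zero (K := K) fun φ => ?_
    rw [mulVecLin_apply, dual_comp_map_mulVec]
    exact hV.2 (mem_scalarExtension_iff.1 hv φ)

lemma isOutputNulling_scalarDescent {W : Submodule L (ι → L)}
    (hW : IsOutputNulling (A.map (algebraMap K L)) (B.map (algebraMap K L))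
      (C.map (algebraMap K L)) W) :
    IsOutputNulling A B C (scalarDescent K W) := by
  have mem_descent (φ : Dual K L) {w : ι → L} (hw : w ∈ W) : φ ∘ w ∈ scalarDescent K W :=
    Submodule.mem_iSup_of_mem φ ⟨w, hw, rfl⟩
  constructor
  · suffices scalarDescent K W ≤
        (scalarDescent K W ⊔ LinearMap.range B.mulVecLin).comap A.mulVecLin from this
    refine iSup_le fun φ => Submodule.map_le_iff_le_comap.2 fun w hw => ?_
    obtain ⟨w', hw', _, ⟨u, rfl⟩, hAw⟩ := Submodule.mem_sup.1 (hW.1 w hw)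
    refine Submodule.mem_sup.2 ⟨φ ∘ w', mem_descent φ hw', _, ⟨φ ∘ u, rfl⟩, ?_⟩
    change _ = A *ᵥ (φ ∘ w)
    rw [mulVecLin_apply, ← dual_comp_map_mulVec, ← dual_comp_map_mulVec, ← hAw]
    exact (map_add (φ.compLeft ι) w' _).symm
  · refine iSup_le fun φ => Submodule.map_le_iff_le_comap.2 fun w hw => ?_
    change C *ᵥ (φ ∘ w) = 0
    rw [← dual_comp_map_mulVec, show C.map (algebraMap K L) *ᵥ w = 0 from hW.2 hw]
    exact map_zero (φ.compLeft τ)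

lemma isGreatest_isOutputNulling_scalarExtension
    (hV : IsGreatest {W | IsOutputNulling A B C W} V) :
    IsGreatest {W | IsOutputNulling (A.map (algebraMap K L)) (B.map (algebraMap K L))
      (C.map (algebraMap K L)) W} (scalarExtension L V) :=
  ⟨isOutputNulling_scalarExtension hV.1,
    fun W hW => (gc_scalarDescent_scalarExtension W V).1 (hV.2 (isOutputNulling_scalarDescent hW))⟩

end ScalarExtension

theorem stmt_5_general {K L ι κ τ : Type*} [Field K] [Field L] [Algebra K L] [Infinite L]
    [Fintype ι] [DecidableEq ι] [Fintype κ] {A : Matrix ι ι K} {B : Matrix ι κ K}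
    {C : Matrix τ ι K} {V : Submodule K (ι → K)}
    (hV : IsGreatest {W | IsOutputNulling A B C W} V)
    (hVB : Disjoint V (LinearMap.range B.mulVecLin))
    {F : Matrix κ ι K} (hF : ∀ v ∈ V, (A + B * F) *ᵥ v ∈ V) (z : L) :
    (systemPencil (A.map (algebraMap K L)) (B.map (algebraMap K L))
        (C.map (algebraMap K L)) z).rank <
        ⨆ s, (systemPencil (A.map (algebraMap K L)) (B.map (algebraMap K L))
          (C.map (algebraMap K L)) s).rank ↔
      ∃ v ∈ scalarExtension L V, v ≠ 0 ∧ (A + B * F).map (algebraMap K L) *ᵥ v = z • v := by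
  have map_closed_loop : (A + B * F).map (algebraMap K L) = A.map (algebraMap K L) +
      B.map (algebraMap K L) * F.map (algebraMap K L) := by
    rw [Matrix.map_add _ (map_add _), Matrix.map_mul]
  rw [map_closed_loop]
  refine rank_systemPencil_lt_iSup_iff (isGreatest_isOutputNulling_scalarExtension hV)
    (disjoint_scalarExtension_range hVB) (fun v hv => ?_) z
  rw [← map_closed_loop]
  exact map_mulVec_mem_scalarExtension hF hv

/-- for a non-degenerate system, the invariant zeros are the
eigenvalues of (the complexification of) A + B·F restricted to the invariant
subspace V* (i.e. to the complexification of V*). -/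
theorem stmt_5
    (n m p : ℕ)
    (A : Matrix (Fin n) (Fin n) ℝ) (B : Matrix (Fin n) (Fin m) ℝ)
    (C : Matrix (Fin p) (Fin n) ℝ)
    -- V* : largest (A, Im B)-controlled invariant subspace contained in Ker C
    (Vstar : Submodule ℝ (Fin n → ℝ))
    (hVinv : ∀ v ∈ Vstar, A.mulVec v ∈ Vstar ⊔ LinearMap.range B.mulVecLin)
    (hVker : Vstar ≤ LinearMap.ker C.mulVecLin)
    (hVmax : ∀ W : Submodule ℝ (Fin n → ℝ),
      (∀ v ∈ W, A.mulVec v ∈ W ⊔ LinearMap.range B.mulVecLin) →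
      W ≤ LinearMap.ker C.mulVecLin → W ≤ Vstar)
    -- S* : smallest (A, Ker C)-conditioned invariant subspace containing Im B
    (Sstar : Submodule ℝ (Fin n → ℝ))
    (hSinv : ∀ v ∈ Sstar ⊓ LinearMap.ker C.mulVecLin, A.mulVec v ∈ Sstar)
    (hSim : LinearMap.range B.mulVecLin ≤ Sstar)
    (hSmin : ∀ W : Submodule ℝ (Fin n → ℝ),
      (∀ v ∈ W ⊓ LinearMap.ker C.mulVecLin, A.mulVec v ∈ W) →
      LinearMap.range B.mulVecLin ≤ W → Sstar ≤ W)
    -- non-degeneracy: R* = V* ∩ S* = {0}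
    (hR : Vstar ⊓ Sstar = ⊥)
    -- F renders V* invariant for A + B·F
    (F : Matrix (Fin m) (Fin n) ℝ)
    (hF : ∀ v ∈ Vstar, (A + B * F).mulVec v ∈ Vstar) :
    -- the invariant zeros are exactly the eigenvalues of the restriction of
    -- (the complexification of) A + B·F to (the complexification of) V*
    ∀ z : ℂ, IsInvariantZero A B C z ↔
      ∃ v : Fin n → ℂ,
        v ∈ Submodule.span ℂ
          ((fun r : Fin n → ℝ => fun j => (r j : ℂ)) '' (Vstar : Set (Fin n → ℝ))) ∧
        v ≠ 0 ∧ ((A + B * F).map Complex.ofReal).mulVec v = z • v := by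
  exact stmt_5_general ⟨⟨hVinv, hVker⟩, fun W hW => hVmax W hW.1 hW.2⟩
    ((disjoint_iff.2 hR).mono_right hSim) hF
end

section
/- Assume T ≥ n and persistency of excitation. For any initial state x̄₀ ∈ ℝⁿ and any input sequence ū(0),…,ū(T−1), let X̄_T ∈ ℝ^{nT} and Ȳ_T ∈ ℝ^{pT} denote the stacked state trajectory (x(1),…,x(T)) and output trajectory (y(0),…,y(T−1)) of the system from x(0) = x̄₀ with this input. Then there exist vectors α and β such that x̄₀ = X0·K_U·α, Ū_T = U·K0·β (Ū_T the stacked input), X̄_T = X·K_U·α + X·K0·β, and Ȳ_T = Y·K_U·α + Y·K0·β. -/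
/-!
Full row rank of `[X0; U]` makes `g ↦ (X0 g, U g)` surjective, so `X0` is already onto when
restricted to `Ker U = range KU`, and `U` when restricted to `Ker X0 = range K0`. This gives `α`
and `β` with `X0 KU α = x̄₀`, `U KU α = 0`, `X0 K0 β = 0` and `U K0 β = Ū`. With the weights
`g = KU α + K0 β`, the combination of the recorded experiments is a trajectory with the same
initial state and the same inputs as the given one, hence it has the same states and outputs.
-/

section Trajectories

open scoped Matrix

variable {R ι σ μ : Type*} [CommSemiring R] [Fintype ι] [Fintype σ] [Fintype μ]

/-- The states `x` and inputs `u` obey `x(t+1) = A x(t) + B u(t)` over the horizon `T`.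
Only `x(0), …, x(T)` and `u(0), …, u(T-1)` are constrained; later values are arbitrary. -/
def IsTrajectory (A : Matrix σ σ R) (B : Matrix σ μ R) (T : ℕ)
    (x : ℕ → σ → R) (u : ℕ → μ → R) : Prop :=
  ∀ t < T, x (t + 1) = A *ᵥ x t + B *ᵥ u t

namespace IsTrajectory

variable {A : Matrix σ σ R} {B : Matrix σ μ R} {T : ℕ}

lemma sum_smul {x : ι → ℕ → σ → R} {u : ι → ℕ → μ → R}
    (h : ∀ i, IsTrajectory A B T (x i) (u i)) (g : ι → R) :
    IsTrajectory A B T (∑ i, g i • x i) (∑ i, g i • u i) := by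
  intro t ht
  simp only [Finset.sum_apply, Pi.smul_apply, Matrix.mulVec_sum, Matrix.mulVec_smul,
    ← Finset.sum_add_distrib, ← smul_add, (h _) t ht]

lemma state_unique {x y : ℕ → σ → R} {u v : ℕ → μ → R}
    (hx : IsTrajectory A B T x u) (hy : IsTrajectory A B T y v)
    (h_init : x 0 = y 0) (h_input : ∀ t < T, u t = v t) {t : ℕ} (ht : t ≤ T) : x t = y t := by
  induction t with
  | zero => exact h_init
  | succ t ih => rw [hx t ht, hy t ht, ih (Nat.le_of_succ_le ht), h_input t ht]

lemma state_eq_sum_smul {x : ι → ℕ → σ → R} {u : ι → ℕ → μ → R}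
    {xbar : ℕ → σ → R} {ubar : ℕ → μ → R} (hbar : IsTrajectory A B T xbar ubar)
    (h : ∀ i, IsTrajectory A B T (x i) (u i)) {g : ι → R}
    (h_init : xbar 0 = ∑ i, g i • x i 0) (h_input : ∀ t < T, ubar t = ∑ i, g i • u i t)
    {t : ℕ} (ht : t ≤ T) : xbar t = ∑ i, g i • x i t := by
  simpa only [Finset.sum_apply, Pi.smul_apply] using
    hbar.state_unique (sum_smul h g) (by simpa only [Finset.sum_apply, Pi.smul_apply] using h_init)
      (by simpa only [Finset.sum_apply, Pi.smul_apply] using h_input) ht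

end IsTrajectory

end Trajectories

section DataMatrices

open scoped Matrix

variable {R ι κ ν : Type*} [CommSemiring R] [Fintype ι]

lemma mulVec_eq_sum_smul_of_apply_eq {D : Matrix κ ι R} {w : ι → κ → R}
    (hD : ∀ j i, D j i = w i j) (g : ι → R) : D *ᵥ g = ∑ i, g i • w i := by
  obtain rfl : D = (Matrix.of w)ᵀ := Matrix.ext hD
  exact (Matrix.mulVec_transpose _ g).trans (Matrix.vecMul_eq_sum g _)

lemma stacked_mulVec_apply {τ : Type*} {D : Matrix (τ × κ) ι R} {w : ι → τ → κ → R}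
    (hD : ∀ t j i, D (t, j) i = w i t j) (g : ι → R) (t : τ) (j : κ) :
    (D *ᵥ g) (t, j) = (∑ i, g i • w i t) j := by
  rw [mulVec_eq_sum_smul_of_apply_eq (w := fun i tj => w i tj.1 tj.2) (fun tj i => hD tj.1 tj.2 i)]
  simp only [Finset.sum_apply, Pi.smul_apply]

lemma mulVec_surjective_of_rank_eq_card {F : Type*} [Field F] [Fintype κ] {M : Matrix κ ι F}
    (hM : M.rank = Fintype.card κ) : Function.Surjective M.mulVec := by
  have h_range : LinearMap.range M.mulVecLin = ⊤ :=
    Submodule.eq_top_of_finrank_eq (hM.trans (Module.finrank_fintype_fun_eq_card F).symm)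
  exact LinearMap.range_eq_top.mp h_range

lemma exists_mulVec_eq_of_fromRows_surjective {P : Matrix κ ι R} {Q : Matrix ν ι R}
    (hPQ : Function.Surjective (Matrix.fromRows P Q).mulVec) (a : κ → R) (b : ν → R) :
    ∃ g, P *ᵥ g = a ∧ Q *ᵥ g = b := by
  obtain ⟨g, hg⟩ := hPQ (Sum.elim a b)
  rw [Matrix.fromRows_mulVec] at hg
  exact ⟨g, Sum.elim_eq_iff.mp hg⟩

lemma exists_mulVec_mulVec_eq_of_range_eq_ker {γ : Type*} [Fintype γ] {P : Matrix κ ι R}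
    {Q : Matrix ν ι R} {K : Matrix ι γ R}
    (hK : LinearMap.range K.mulVecLin = LinearMap.ker Q.mulVecLin) {a : κ → R}
    (ha : ∃ g, P *ᵥ g = a ∧ Q *ᵥ g = 0) :
    ∃ α, P *ᵥ (K *ᵥ α) = a ∧ Q *ᵥ (K *ᵥ α) = 0 := by
  obtain ⟨g, hPg, hQg⟩ := ha
  obtain ⟨α, rfl⟩ : g ∈ LinearMap.range K.mulVecLin := hK ▸ hQg
  exact ⟨α, hPg, hQg⟩

end DataMatrices

open scoped Matrix in
theorem stmt_6_general {F ι σ μ o κ κ' : Type*} [Field F] [Fintype ι] [Fintype σ] [Fintype μ]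
    [Fintype κ] [Fintype κ'] {T : ℕ}
    {A : Matrix σ σ F} {B : Matrix σ μ F} {C : Matrix o σ F}
    {x : ι → ℕ → σ → F} {u : ι → ℕ → μ → F} (hdyn : ∀ i, IsTrajectory A B T (x i) (u i))
    {X0 : Matrix σ ι F} (hX0 : ∀ j i, X0 j i = x i 0 j)
    {U : Matrix (Fin T × μ) ι F} (hU : ∀ (t : Fin T) j i, U (t, j) i = u i t j)
    {X : Matrix (Fin T × σ) ι F} (hX : ∀ (t : Fin T) j i, X (t, j) i = x i (t + 1) j)
    {Y : Matrix (Fin T × o) ι F} (hY : ∀ (t : Fin T) j i, Y (t, j) i = (C *ᵥ x i t) j)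
    (hpe : (Matrix.fromRows X0 U).rank = Fintype.card σ + Fintype.card μ * T)
    {KU : Matrix ι κ F} (hKU : LinearMap.range KU.mulVecLin = LinearMap.ker U.mulVecLin)
    {K0 : Matrix ι κ' F} (hK0 : LinearMap.range K0.mulVecLin = LinearMap.ker X0.mulVecLin)
    {xbar : ℕ → σ → F} {ubar : ℕ → μ → F} (hbar : IsTrajectory A B T xbar ubar) :
    ∃ (α : κ → F) (β : κ' → F),
      xbar 0 = (X0 * KU) *ᵥ α ∧
      (fun tj : Fin T × μ => ubar tj.1 tj.2) = (U * K0) *ᵥ β ∧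
      (fun tj : Fin T × σ => xbar (tj.1 + 1) tj.2) = (X * KU) *ᵥ α + (X * K0) *ᵥ β ∧
      (fun tj : Fin T × o => (C *ᵥ xbar tj.1) tj.2) = (Y * KU) *ᵥ α + (Y * K0) *ᵥ β := by
  have h_card : Fintype.card (σ ⊕ Fin T × μ) = Fintype.card σ + Fintype.card μ * T := by
    rw [Fintype.card_sum, Fintype.card_prod, Fintype.card_fin, mul_comm]
  have h_surj := exists_mulVec_eq_of_fromRows_surjective
    (mulVec_surjective_of_rank_eq_card (hpe.trans h_card.symm))
  obtain ⟨α, hX0α, hUα⟩ := exists_mulVec_mulVec_eq_of_range_eq_ker hKU (h_surj (xbar 0) 0)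
  obtain ⟨β, hUβ, hX0β⟩ := exists_mulVec_mulVec_eq_of_range_eq_ker hK0
    ((h_surj 0 fun tj => ubar tj.1 tj.2).imp fun _ => And.symm)
  let g := KU *ᵥ α + K0 *ᵥ β
  have h_init : xbar 0 = ∑ i, g i • x i 0 := by
    rw [← mulVec_eq_sum_smul_of_apply_eq hX0, Matrix.mulVec_add, hX0α, hX0β, add_zero]
  have h_input : ∀ t < T, ubar t = ∑ i, g i • u i t := by
    intro t ht
    ext j
    rw [← stacked_mulVec_apply hU g ⟨t, ht⟩ j, Matrix.mulVec_add, hUα, hUβ, zero_add]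
  have h_state {t : ℕ} (ht : t ≤ T) : xbar t = ∑ i, g i • x i t :=
    hbar.state_eq_sum_smul hdyn h_init h_input ht
  simp only [← Matrix.mulVec_mulVec, ← Matrix.mulVec_add]
  refine ⟨α, β, hX0α.symm, hUβ.symm, ?_, ?_⟩ <;> ext ⟨t, j⟩
  · rw [stacked_mulVec_apply hX, h_state t.isLt]
  · rw [stacked_mulVec_apply hY, h_state t.isLt.le, Matrix.mulVec_sum]
    simp only [Matrix.mulVec_smul, g]


/-- any state and output trajectory of the system can be written
as a linear combination of the experimental data (free response from X·K_U,
forced response from X·K0). -/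
theorem stmt_6
    (n m p N T : ℕ) (hT : n ≤ T)
    (A : Matrix (Fin n) (Fin n) ℝ) (B : Matrix (Fin n) (Fin m) ℝ)
    (C : Matrix (Fin p) (Fin n) ℝ)
    -- data generated by N experiments of horizon T
    (x : Fin N → ℕ → Fin n → ℝ) (u : Fin N → ℕ → Fin m → ℝ)
    (hdyn : ∀ i t, x i (t + 1) = A.mulVec (x i t) + B.mulVec (u i t))
    (X0 : Matrix (Fin n) (Fin N) ℝ) (hX0 : ∀ j i, X0 j i = x i 0 j)
    (U : Matrix (Fin T × Fin m) (Fin N) ℝ)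
    (hU : ∀ (t : Fin T) (j : Fin m) (i : Fin N), U (t, j) i = u i t.val j)
    (X : Matrix (Fin T × Fin n) (Fin N) ℝ)
    (hX : ∀ (t : Fin T) (j : Fin n) (i : Fin N), X (t, j) i = x i (t.val + 1) j)
    (Y : Matrix (Fin T × Fin p) (Fin N) ℝ)
    (hY : ∀ (t : Fin T) (j : Fin p) (i : Fin N), Y (t, j) i = C.mulVec (x i t.val) j)
    -- persistency of excitation
    (hpe : (Matrix.fromRows X0 U).rank = n + m * T)
    -- K_U and K0: matrices whose columns form bases of Ker U and Ker X0
    (kU k0 : ℕ)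
    (KU : Matrix (Fin N) (Fin kU) ℝ)
    (hKUrange : LinearMap.range KU.mulVecLin = LinearMap.ker U.mulVecLin)
    (hKUinj : Function.Injective KU.mulVecLin)
    (K0 : Matrix (Fin N) (Fin k0) ℝ)
    (hK0range : LinearMap.range K0.mulVecLin = LinearMap.ker X0.mulVecLin)
    (hK0inj : Function.Injective K0.mulVecLin)
    -- an arbitrary trajectory of the system
    (xbar : ℕ → Fin n → ℝ) (ubar : ℕ → Fin m → ℝ)
    (hbar : ∀ t, xbar (t + 1) = A.mulVec (xbar t) + B.mulVec (ubar t)) :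
    ∃ (α : Fin kU → ℝ) (β : Fin k0 → ℝ),
      -- x̄₀ = X0·K_U·α
      xbar 0 = (X0 * KU).mulVec α ∧
      -- Ū_T = U·K0·β
      (fun tj : Fin T × Fin m => ubar tj.1.val tj.2) = (U * K0).mulVec β ∧
      -- X̄_T = X·K_U·α + X·K0·β
      (fun tj : Fin T × Fin n => xbar (tj.1.val + 1) tj.2)
        = (X * KU).mulVec α + (X * K0).mulVec β ∧
      -- Ȳ_T = Y·K_U·α + Y·K0·β
      (fun tj : Fin T × Fin p => C.mulVec (xbar tj.1.val) tj.2)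
        = (Y * KU).mulVec α + (Y * K0).mulVec β :=
  stmt_6_general (fun i t _ => hdyn i t) hX0 hU hX hY (by simpa only [Fintype.card_fin] using hpe)
    hKUrange hK0range (fun t _ => hbar t)
end

section
/- Under persistency of excitation, i.e., rank [X0; U] = n + mT, the matrix X0·K_U has full row rank n and the matrix U·K0 has full row rank mT, where K_U and K0 are matrices whose columns form bases of Ker U and Ker X0, respectively. -/
/-!
Rank-nullity gives `rank [A; B] = rank (A * C) + rank B` whenever the columns of `C` span `Ker B`.
If `[A; B]` has full row rank, neither summand can fall short of the number of rows of `A`,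
respectively `B`.
-/

section RankNullity

open Module LinearMap

variable {K V W W' : Type*} [DivisionRing K] [AddCommGroup V] [Module K V]
  [AddCommGroup W] [Module K W] [AddCommGroup W'] [Module K W']

theorem finrank_map_add_finrank_inf_ker (f : V →ₗ[K] W) (p : Submodule K V)
    [FiniteDimensional K p] :
    finrank K (p.map f) + finrank K ↥(p ⊓ ker f) = finrank K p := by
  rw [← range_domRestrict, ← Submodule.map_comap_subtype, Submodule.finrank_map_subtype_eq,
    ← ker_domRestrict, finrank_range_add_finrank_ker]

theorem finrank_range_prod [FiniteDimensional K V] (f : V →ₗ[K] W) (g : V →ₗ[K] W') :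
    finrank K (range (f.prod g)) = finrank K ((ker g).map f) + finrank K (range g) := by
  have nullity_prod := (f.prod g).finrank_range_add_finrank_ker
  have nullity_g := g.finrank_range_add_finrank_ker
  have nullity_f_on_ker_g := finrank_map_add_finrank_inf_ker f (ker g)
  rw [ker_prod, inf_comm] at nullity_prod
  lia

end RankNullity

section FromRows

open Matrix

variable {R K m₁ m₂ n k : Type*} [Fintype n]

theorem rank_fromRows_eq_finrank_range_prod [CommSemiring R]
    (A : Matrix m₁ n R) (B : Matrix m₂ n R) :
    (fromRows A B).rank =
      Module.finrank R (LinearMap.range (A.mulVecLin.prod B.mulVecLin)) := by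
  have prod_eq_comp : A.mulVecLin.prod B.mulVecLin =
      (LinearEquiv.sumArrowLequivProdArrow m₁ m₂ R R).toLinearMap ∘ₗ
        (fromRows A B).mulVecLin := by
    ext <;> simp [fromRows_mulVec]
  rw [prod_eq_comp, LinearMap.range_comp, LinearEquiv.finrank_map_eq, rank]

theorem rank_fromRows_comm [CommSemiring R] (A : Matrix m₁ n R) (B : Matrix m₂ n R) :
    (fromRows A B).rank = (fromRows B A).rank := by
  rw [← rank_reindex (Equiv.sumComm m₁ m₂) (Equiv.refl n)]
  congr 1
  ext (_ | _) _ <;> rfl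

variable [Field K] [Fintype k]

theorem rank_fromRows_eq_rank_mul_add_rank (A : Matrix m₁ n K) (B : Matrix m₂ n K)
    (C : Matrix n k K) (hC : LinearMap.range C.mulVecLin = LinearMap.ker B.mulVecLin) :
    (fromRows A B).rank = (A * C).rank + B.rank := by
  rw [rank_fromRows_eq_finrank_range_prod, finrank_range_prod, ← hC, ← LinearMap.range_comp,
    ← mulVecLin_mul, rank, rank]

theorem rank_mul_eq_card_of_rank_fromRows_eq_card_add_card [Fintype m₁] [Fintype m₂]
    (A : Matrix m₁ n K) (B : Matrix m₂ n K) (C : Matrix n k K)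
    (hC : LinearMap.range C.mulVecLin = LinearMap.ker B.mulVecLin)
    (hAB : (fromRows A B).rank = Fintype.card m₁ + Fintype.card m₂) :
    (A * C).rank = Fintype.card m₁ := by
  have rank_add := rank_fromRows_eq_rank_mul_add_rank A B C hC
  have rank_mul_le := (A * C).rank_le_card_height
  have rank_le := B.rank_le_card_height
  lia

end FromRows

theorem stmt_9_general {F m₁ m₂ n k₁ k₂ : Type*} [Field F]
    [Fintype m₁] [Fintype m₂] [Fintype n] [Fintype k₁] [Fintype k₂]
    (X0 : Matrix m₁ n F) (U : Matrix m₂ n F)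
    (KU : Matrix n k₁ F) (hKU : LinearMap.range KU.mulVecLin = LinearMap.ker U.mulVecLin)
    (K0 : Matrix n k₂ F) (hK0 : LinearMap.range K0.mulVecLin = LinearMap.ker X0.mulVecLin)
    (hpe : (Matrix.fromRows X0 U).rank = Fintype.card m₁ + Fintype.card m₂) :
    (X0 * KU).rank = Fintype.card m₁ ∧ (U * K0).rank = Fintype.card m₂ := by
  have hpe_swap : (Matrix.fromRows U X0).rank = Fintype.card m₂ + Fintype.card m₁ := by
    rw [rank_fromRows_comm, hpe, add_comm]
  exact ⟨rank_mul_eq_card_of_rank_fromRows_eq_card_add_card X0 U KU hKU hpe,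
    rank_mul_eq_card_of_rank_fromRows_eq_card_add_card U X0 K0 hK0 hpe_swap⟩

/-- under persistency of excitation (rank [X0; U] = n + mT),
X0·K_U has full row rank n and U·K0 has full row rank mT. -/
theorem stmt_9
    (n m T N kU k0 : ℕ)
    (X0 : Matrix (Fin n) (Fin N) ℝ)
    (U : Matrix (Fin T × Fin m) (Fin N) ℝ)
    -- K_U and K0: matrices whose columns form bases of Ker U and Ker X0
    (KU : Matrix (Fin N) (Fin kU) ℝ)
    (hKUrange : LinearMap.range KU.mulVecLin = LinearMap.ker U.mulVecLin)
    (hKUinj : Function.Injective KU.mulVecLin)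
    (K0 : Matrix (Fin N) (Fin k0) ℝ)
    (hK0range : LinearMap.range K0.mulVecLin = LinearMap.ker X0.mulVecLin)
    (hK0inj : Function.Injective K0.mulVecLin)
    -- persistency of excitation
    (hpe : (Matrix.fromRows X0 U).rank = n + m * T) :
    (X0 * KU).rank = n ∧ (U * K0).rank = m * T := by
  simpa [mul_comm] using
    stmt_9_general X0 U KU hKUrange K0 hK0range (by simpa [mul_comm] using hpe)
end

section
/- A subspace V ⊆ ℝⁿ is (A, Im B)-controlled invariant, i.e., A V ⊆ V + Im B, if and only if there exists a feedback gain F ∈ ℝ^{m×n} such that (A + B·F)·V ⊆ V. -/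
/-!
Modulo the target subspace `W`, the feedback condition `(A + B F) V ⊆ W` is the linear equation
`B F = -A` on `V`. The inclusion `A V ⊆ W + Im B` says that the range of its right-hand side lies
in the range of `B`, so the equation has a solution on `V`, which extends to the whole space along
a complement of `V`.
-/

open LinearMap

section Lifting

variable {R M N P : Type*} [Semiring R] [AddCommMonoid M] [AddCommMonoid N] [AddCommMonoid P]
  [Module R M] [Module R N] [Module R P]

theorem range_le_range_iff_exists_comp_eq [Module.Projective R P] {f : P →ₗ[R] N}
    {g : M →ₗ[R] N} : range f ≤ range g ↔ ∃ h : P →ₗ[R] M, g ∘ₗ h = f := by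
  refine ⟨fun hfg ↦ ?_, ?_⟩
  · obtain ⟨h, hh⟩ := Module.projective_lifting_property g.rangeRestrict
      (f.codRestrict (range g) fun x ↦ hfg (mem_range_self f x)) g.surjective_rangeRestrict
    exact ⟨h, congrArg ((range g).subtype ∘ₗ ·) hh⟩
  · rintro ⟨h, rfl⟩
    exact range_comp_le_range h g

end Lifting

section Feedback

variable {R X Y U : Type*} [Ring R] [AddCommGroup X] [AddCommGroup Y] [AddCommGroup U]
  [Module R X] [Module R Y] [Module R U]

theorem exists_comp_subtype_eq_of_isCompl {V V' : Submodule R X} (hV : IsCompl V V')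
    (f : V →ₗ[R] U) : ∃ g : X →ₗ[R] U, g ∘ₗ V.subtype = f :=
  ⟨f ∘ₗ V.projectionOnto V' hV, by rw [comp_assoc, Submodule.projectionOnto_comp_subtype, comp_id]⟩

theorem map_le_iff_mkQ_comp_comp_subtype_eq_zero {T : X →ₗ[R] Y} {V : Submodule R X}
    {W : Submodule R Y} : V.map T ≤ W ↔ W.mkQ ∘ₗ T ∘ₗ V.subtype = 0 := by
  rw [← range_le_ker_iff, Submodule.ker_mkQ, range_comp, Submodule.range_subtype]

theorem map_le_sup_range_iff_range_mkQ_comp_le {A : X →ₗ[R] Y} {B : U →ₗ[R] Y}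
    {V : Submodule R X} {W : Submodule R Y} :
    V.map A ≤ W ⊔ range B ↔ range (W.mkQ ∘ₗ A ∘ₗ V.subtype) ≤ range (W.mkQ ∘ₗ B) := by
  rw [← Submodule.comap_map_mkQ, ← Submodule.map_le_iff_le_comap, range_comp, range_comp,
    range_comp, Submodule.range_subtype]

theorem stmt_17_general (A : X →ₗ[R] Y) (B : U →ₗ[R] Y) (V : Submodule R X)
    [Module.Projective R V] (hV : ∃ V', IsCompl V V') (W : Submodule R Y) :
    V.map A ≤ W ⊔ range B ↔ ∃ F : X →ₗ[R] U, V.map (A + B ∘ₗ F) ≤ W := by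
  have feedback_iff (F : X →ₗ[R] U) : V.map (A + B ∘ₗ F) ≤ W ↔
      (W.mkQ ∘ₗ B) ∘ₗ (-(F ∘ₗ V.subtype)) = W.mkQ ∘ₗ A ∘ₗ V.subtype := by
    rw [map_le_iff_mkQ_comp_comp_subtype_eq_zero, add_comp, comp_add, comp_neg,
      neg_eq_iff_add_eq_zero, add_comm, comp_assoc, comp_assoc]
  simp only [map_le_sup_range_iff_range_mkQ_comp_le, range_le_range_iff_exists_comp_eq,
    feedback_iff]
  refine ⟨fun ⟨h, hh⟩ ↦ ?_, fun ⟨F, hF⟩ ↦ ⟨_, hF⟩⟩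
  obtain ⟨V', hVV'⟩ := hV
  obtain ⟨F, hF⟩ := exists_comp_subtype_eq_of_isCompl hVV' (-h)
  exact ⟨F, by rwa [hF, neg_neg]⟩

end Feedback

/-- a subspace V is (A, Im B)-controlled invariant iff there is a
feedback gain F with (A + B·F)·V ⊆ V. -/
theorem stmt_17
    (n m : ℕ)
    (A : Matrix (Fin n) (Fin n) ℝ) (B : Matrix (Fin n) (Fin m) ℝ)
    (V : Submodule ℝ (Fin n → ℝ)) :
    (∀ v ∈ V, A.mulVec v ∈ V ⊔ LinearMap.range B.mulVecLin) ↔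
      ∃ F : Matrix (Fin m) (Fin n) ℝ, ∀ v ∈ V, (A + B * F).mulVec v ∈ V := by
  simpa [Submodule.map_le_iff_le_comap, SetLike.le_def, Matrix.toLin'.surjective.exists,
    Matrix.add_mulVec] using stmt_17_general A.mulVecLin B.mulVecLin V V.exists_isCompl V
end
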